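/- Skew-symmetrization of weak Lie 3-algebras is functorial up to homotopy: let f: (L,d,λ) → (L′,d′,λ′) and f′: (L′,d′,λ′) → (L″,d″,λ″) be weak morphisms of weak Lie 3-algebras over a commutative ring k in which 2 and 3 are invertible, and let f′∘f denote their composition. Then the skew-symmetrized components satisfy: (i) the first component of the skew-symmetrization of f′∘f equals f̄1′∘f̄1; (ii) the second component of the skew-symmetrization of f′∘f equals f̄2′∘(f̄1,f̄1) + f̄1′∘f̄2; and (iii) the third component of the skew-symmetrization of f′∘f minus (f̄3′∘(f̄1,f̄1,f̄1) − f̄2′∘(f̄2,f̄1) + f̄2′∘(f̄1,f̄2) − f̄2′∘(f̄1,f̄2)^{(12)} + f̄1′∘f̄3) equals ∂(−(1/24)·Σ_{σ∈S3} sgn(σ)·(f21′∘(f2,f1) + f21′∘(f1,f2))^σ), where ∂ is taken on maps L^⊗3 → L″. In particular, the defect of functoriality in the third component is a boundary. -/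

import Mathlib

namespace WL3

open Finset

/-! ## Graded multilinear maps -/

/-- Cast along an equality of degrees. -/
def gcast {M : ℤ → Type} {i j : ℤ} (h : i = j) (x : M i) : M j := h ▸ x

/-- A degree-`r`, arity-`m` map between ℤ-graded types, given by its components on
homogeneous tuples: its component at degrees `d` maps `L (d 1) ⊗ ⋯ ⊗ L (d m)` to
`M (r + d 1 + ⋯ + d m)`. -/
abbrev MMap (L M : ℤ → Type) (m : ℕ) (r : ℤ) : Type :=
  ∀ d : Fin m → ℤ, (∀ j, L (d j)) → M (r + ∑ j, d j)

variable {L M N : ℤ → Type}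

/-- Cast an `MMap` along equalities of arities and degrees. -/
def mcast {m m' : ℕ} {r r' : ℤ} (hm : m = m') (hr : r = r') (μ : MMap L M m r) :
    MMap L M m' r' := by subst hm; subst hr; exact μ

/-- Koszul sign of the permutation `σ` acting on a tuple of homogeneous elements of
degrees `d`: `∏_{i<j, σ i > σ j} (-1)^(d i · d j)`. -/
def koszulSign {m : ℕ} (d : Fin m → ℤ) (σ : Equiv.Perm (Fin m)) : ℤ :=
  ∏ p ∈ Finset.univ.filter (fun p : Fin m × Fin m => p.1 < p.2 ∧ σ p.2 < σ p.1),
    (-1 : ℤ) ^ (d p.1 * d p.2).natAbs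

/-- The action `μ ↦ μ^σ`, `μ^σ(x₁,…,x_m) = ε(σ;x)·μ(x_{σ⁻¹1},…,x_{σ⁻¹m})`. -/
def pa [∀ i, AddCommGroup (M i)] {m : ℕ} {r : ℤ} (σ : Equiv.Perm (Fin m)) (μ : MMap L M m r) :
    MMap L M m r := fun d x =>
  koszulSign d σ •
    gcast (by rw [Equiv.sum_comp σ.symm d])
      (μ (fun j => d (σ.symm j)) (fun j => x (σ.symm j)))

/-- Degrees of the outer map in a partial composition. -/
def outDeg (m₁ m₂ n : ℕ) (s : ℤ) (d : Fin (m₁ + n + m₂) → ℤ) : Fin (m₁ + 1 + m₂) → ℤ :=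
  Fin.append
    (Fin.append (fun j : Fin m₁ => d (Fin.castAdd m₂ (Fin.castAdd n j)))
      (fun _ : Fin 1 => s + ∑ j : Fin n, d (Fin.castAdd m₂ (Fin.natAdd m₁ j))))
    (fun j : Fin m₂ => d (Fin.natAdd (m₁ + n) j))

theorem outDeg_left (m₁ m₂ n : ℕ) (s : ℤ) (d : Fin (m₁ + n + m₂) → ℤ) (j : Fin m₁) :
    outDeg m₁ m₂ n s d (Fin.castAdd m₂ (Fin.castAdd 1 j))
      = d (Fin.castAdd m₂ (Fin.castAdd n j)) := by
  simp [outDeg, Fin.append_left]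

theorem outDeg_mid (m₁ m₂ n : ℕ) (s : ℤ) (d : Fin (m₁ + n + m₂) → ℤ) (j : Fin 1) :
    outDeg m₁ m₂ n s d (Fin.castAdd m₂ (Fin.natAdd m₁ j))
      = s + ∑ j : Fin n, d (Fin.castAdd m₂ (Fin.natAdd m₁ j)) := by
  simp [outDeg, Fin.append_left, Fin.append_right]

theorem outDeg_right (m₁ m₂ n : ℕ) (s : ℤ) (d : Fin (m₁ + n + m₂) → ℤ) (j : Fin m₂) :
    outDeg m₁ m₂ n s d (Fin.natAdd (m₁ + 1) j) = d (Fin.natAdd (m₁ + n) j) := by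
  simp [outDeg, Fin.append_right]

theorem outDeg_sum (m₁ m₂ n : ℕ) (r s : ℤ) (d : Fin (m₁ + n + m₂) → ℤ) :
    r + ∑ j, outDeg m₁ m₂ n s d j = (r + s) + ∑ j, d j := by
  simp [outDeg, Fin.sum_univ_add, Fin.append_left, Fin.append_right]
  ring

/-- Partial (operadic) composition `μ ∘_{m₁+1} ν` of `μ` (of arity `m₁ + 1 + m₂`) with `ν`
inserted in the slot `m₁ + 1`, with the Koszul sign `(-1)^(|ν|·(d 1 + ⋯ + d m₁))`. -/
def pcomp [∀ i, AddCommGroup (L i)] [∀ i, AddCommGroup (M i)] (m₁ m₂ : ℕ) {n : ℕ} {r s : ℤ}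
    (μ : MMap L M (m₁ + 1 + m₂) r) (ν : MMap L L n s) : MMap L M (m₁ + n + m₂) (r + s) :=
  fun d x =>
    ((-1 : ℤ) ^ (s * ∑ j : Fin m₁, d (Fin.castAdd m₂ (Fin.castAdd n j))).natAbs) •
    gcast (outDeg_sum m₁ m₂ n r s d)
      (μ (outDeg m₁ m₂ n s d)
        (fun j => Fin.addCases (motive := fun t => L (outDeg m₁ m₂ n s d t))
          (fun j' => Fin.addCases (motive := fun t => L (outDeg m₁ m₂ n s d (Fin.castAdd m₂ t)))
            (fun j1 => gcast (outDeg_left m₁ m₂ n s d j1).symm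
              (x (Fin.castAdd m₂ (Fin.castAdd n j1))))
            (fun j0 => gcast (outDeg_mid m₁ m₂ n s d j0).symm
              (ν (fun j2 => d (Fin.castAdd m₂ (Fin.natAdd m₁ j2)))
                 (fun j2 => x (Fin.castAdd m₂ (Fin.natAdd m₁ j2)))))
            j')
          (fun j3 => gcast (outDeg_right m₁ m₂ n s d j3).symm (x (Fin.natAdd (m₁ + n) j3)))
          j))

/-- Composition `μ ∘ g` of an arity-1 map with an arity-`a` map. -/
def comp₁ {a : ℕ} {r s : ℤ} (μ : MMap M N 1 r) (g : MMap L M a s) : MMap L N a (r + s) :=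
  fun d x =>
    gcast (by rw [Fin.sum_univ_one]; ring)
      (μ (fun _ : Fin 1 => s + ∑ j, d j) (fun _ => g d x))

theorem sum2 (a b : ℕ) (r s₁ s₂ : ℤ) (d : Fin (a + b) → ℤ) :
    r + ∑ t : Fin 2, ![s₁ + ∑ j : Fin a, d (Fin.castAdd b j),
                       s₂ + ∑ j : Fin b, d (Fin.natAdd a j)] t
      = (r + (s₁ + s₂)) + ∑ j, d j := by
  simp [Fin.sum_univ_two, Fin.sum_univ_add]
  ring

/-- Full composition `μ ∘ (g₁, g₂)` with Koszul signs. -/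
def comp₂ [∀ i, AddCommGroup (N i)] {a b : ℕ} {r s₁ s₂ : ℤ}
    (μ : MMap M N 2 r) (g₁ : MMap L M a s₁) (g₂ : MMap L M b s₂) :
    MMap L N (a + b) (r + (s₁ + s₂)) :=
  fun d x =>
    ((-1 : ℤ) ^ (s₂ * ∑ j : Fin a, d (Fin.castAdd b j)).natAbs) •
    gcast (sum2 a b r s₁ s₂ d)
      (μ ![s₁ + ∑ j : Fin a, d (Fin.castAdd b j), s₂ + ∑ j : Fin b, d (Fin.natAdd a j)]
        (Fin.cons (gcast (by simp) (g₁ (fun j => d (Fin.castAdd b j)) (fun j => x (Fin.castAdd b j))))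
          (fun _ : Fin 1 => gcast (by simp) (g₂ (fun j => d (Fin.natAdd a j)) (fun j => x (Fin.natAdd a j))))))

theorem sum3 (a b c : ℕ) (r s₁ s₂ s₃ : ℤ) (d : Fin (a + b + c) → ℤ) :
    r + ∑ t : Fin 3, ![s₁ + ∑ j : Fin a, d (Fin.castAdd c (Fin.castAdd b j)),
                       s₂ + ∑ j : Fin b, d (Fin.castAdd c (Fin.natAdd a j)),
                       s₃ + ∑ j : Fin c, d (Fin.natAdd (a + b) j)] t
      = (r + (s₁ + s₂ + s₃)) + ∑ j, d j := by
  simp [Fin.sum_univ_three, Fin.sum_univ_add]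
  ring

/-- Full composition `μ ∘ (g₁, g₂, g₃)` with Koszul signs. -/
def comp₃ [∀ i, AddCommGroup (N i)] {a b c : ℕ} {r s₁ s₂ s₃ : ℤ}
    (μ : MMap M N 3 r) (g₁ : MMap L M a s₁) (g₂ : MMap L M b s₂) (g₃ : MMap L M c s₃) :
    MMap L N (a + b + c) (r + (s₁ + s₂ + s₃)) :=
  fun d x =>
    ((-1 : ℤ) ^ (s₂ * (∑ j : Fin a, d (Fin.castAdd c (Fin.castAdd b j)))
        + s₃ * ((∑ j : Fin a, d (Fin.castAdd c (Fin.castAdd b j)))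
          + ∑ j : Fin b, d (Fin.castAdd c (Fin.natAdd a j)))).natAbs) •
    gcast (sum3 a b c r s₁ s₂ s₃ d)
      (μ ![s₁ + ∑ j : Fin a, d (Fin.castAdd c (Fin.castAdd b j)),
           s₂ + ∑ j : Fin b, d (Fin.castAdd c (Fin.natAdd a j)),
           s₃ + ∑ j : Fin c, d (Fin.natAdd (a + b) j)]
        (Fin.cons (gcast (by simp)
            (g₁ (fun j => d (Fin.castAdd c (Fin.castAdd b j)))
                (fun j => x (Fin.castAdd c (Fin.castAdd b j)))))
          (Fin.cons (gcast (by simp)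
              (g₂ (fun j => d (Fin.castAdd c (Fin.natAdd a j)))
                  (fun j => x (Fin.castAdd c (Fin.natAdd a j)))))
            (fun _ : Fin 1 => gcast (by simp)
              (g₃ (fun j => d (Fin.natAdd (a + b) j))
                  (fun j => x (Fin.natAdd (a + b) j)))))))

theorem sum4 (a b c e : ℕ) (r s₁ s₂ s₃ s₄ : ℤ) (d : Fin (a + b + c + e) → ℤ) :
    r + ∑ t : Fin 4, ![s₁ + ∑ j : Fin a, d (Fin.castAdd e (Fin.castAdd c (Fin.castAdd b j))),
                       s₂ + ∑ j : Fin b, d (Fin.castAdd e (Fin.castAdd c (Fin.natAdd a j))),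
                       s₃ + ∑ j : Fin c, d (Fin.castAdd e (Fin.natAdd (a + b) j)),
                       s₄ + ∑ j : Fin e, d (Fin.natAdd (a + b + c) j)] t
      = (r + (s₁ + s₂ + s₃ + s₄)) + ∑ j, d j := by
  simp [Fin.sum_univ_four, Fin.sum_univ_add]
  ring

/-- Full composition `μ ∘ (g₁, g₂, g₃, g₄)` with Koszul signs. -/
def comp₄ [∀ i, AddCommGroup (N i)] {a b c e : ℕ} {r s₁ s₂ s₃ s₄ : ℤ}
    (μ : MMap M N 4 r) (g₁ : MMap L M a s₁) (g₂ : MMap L M b s₂) (g₃ : MMap L M c s₃)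
    (g₄ : MMap L M e s₄) :
    MMap L N (a + b + c + e) (r + (s₁ + s₂ + s₃ + s₄)) :=
  fun d x =>
    ((-1 : ℤ) ^ (s₂ * (∑ j : Fin a, d (Fin.castAdd e (Fin.castAdd c (Fin.castAdd b j))))
        + s₃ * ((∑ j : Fin a, d (Fin.castAdd e (Fin.castAdd c (Fin.castAdd b j))))
          + ∑ j : Fin b, d (Fin.castAdd e (Fin.castAdd c (Fin.natAdd a j))))
        + s₄ * ((∑ j : Fin a, d (Fin.castAdd e (Fin.castAdd c (Fin.castAdd b j))))
          + (∑ j : Fin b, d (Fin.castAdd e (Fin.castAdd c (Fin.natAdd a j))))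
          + ∑ j : Fin c, d (Fin.castAdd e (Fin.natAdd (a + b) j)))).natAbs) •
    gcast (sum4 a b c e r s₁ s₂ s₃ s₄ d)
      (μ ![s₁ + ∑ j : Fin a, d (Fin.castAdd e (Fin.castAdd c (Fin.castAdd b j))),
           s₂ + ∑ j : Fin b, d (Fin.castAdd e (Fin.castAdd c (Fin.natAdd a j))),
           s₃ + ∑ j : Fin c, d (Fin.castAdd e (Fin.natAdd (a + b) j)),
           s₄ + ∑ j : Fin e, d (Fin.natAdd (a + b + c) j)]
        (Fin.cons (gcast (by simp)
            (g₁ (fun j => d (Fin.castAdd e (Fin.castAdd c (Fin.castAdd b j))))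
                (fun j => x (Fin.castAdd e (Fin.castAdd c (Fin.castAdd b j))))))
          (Fin.cons (gcast (by simp)
              (g₂ (fun j => d (Fin.castAdd e (Fin.castAdd c (Fin.natAdd a j))))
                  (fun j => x (Fin.castAdd e (Fin.castAdd c (Fin.natAdd a j))))))
            (Fin.cons (gcast (by simp)
                (g₃ (fun j => d (Fin.castAdd e (Fin.natAdd (a + b) j)))
                    (fun j => x (Fin.castAdd e (Fin.natAdd (a + b) j)))))
              (fun _ : Fin 1 => gcast (by simp)
                (g₄ (fun j => d (Fin.natAdd (a + b + c) j))
                    (fun j => x (Fin.natAdd (a + b + c) j))))))))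

/-- The differential `∂(μ) = D' ∘ μ - (-1)^{|μ|} ∑ᵢ μ ∘ᵢ D`. -/
def bdry [∀ i, AddCommGroup (L i)] [∀ i, AddCommGroup (M i)] {m : ℕ} {r : ℤ}
    (D' : MMap M M 1 (-1)) (D : MMap L L 1 (-1)) (μ : MMap L M m r) : MMap L M m (-1 + r) :=
  comp₁ D' μ - ((-1 : ℤ) ^ r.natAbs) •
    ∑ p : Fin m, mcast (by have := p.isLt; omega) (by ring)
      (pcomp p.val (m - 1 - p.val) (mcast (by have := p.isLt; omega) rfl μ) D)

/-- The identity, as an `MMap`. -/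
def idm : MMap L L 1 0 := fun d x => gcast (by rw [Fin.sum_univ_one, zero_add]) (x 0)

/-- `μ ∘_{m₁+1} ν`, recast to a specified target degree `R`. -/
def pc [∀ i, AddCommGroup (L i)] [∀ i, AddCommGroup (M i)] (R : ℤ) (m₁ m₂ : ℕ) {n : ℕ}
    {r s : ℤ} (μ : MMap L M (m₁ + 1 + m₂) r) (ν : MMap L L n s)
    (h : r + s = R := by norm_num) : MMap L M (m₁ + n + m₂) R :=
  mcast rfl h (pcomp m₁ m₂ μ ν)

/-- `μ ∘ g`, recast to a specified target degree `R`. -/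
def fc1 (R : ℤ) {a : ℕ} {r s : ℤ} (μ : MMap M N 1 r) (g : MMap L M a s)
    (h : r + s = R := by norm_num) : MMap L N a R :=
  mcast rfl h (comp₁ μ g)

/-- `μ ∘ (g₁, g₂)`, recast to a specified target degree `R`. -/
def fc2 [∀ i, AddCommGroup (N i)] (R : ℤ) {a b : ℕ} {r s₁ s₂ : ℤ}
    (μ : MMap M N 2 r) (g₁ : MMap L M a s₁) (g₂ : MMap L M b s₂)
    (h : r + (s₁ + s₂) = R := by norm_num) : MMap L N (a + b) R :=
  mcast rfl h (comp₂ μ g₁ g₂)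

/-- `μ ∘ (g₁, g₂, g₃)`, recast to a specified target degree `R`. -/
def fc3 [∀ i, AddCommGroup (N i)] (R : ℤ) {a b c : ℕ} {r s₁ s₂ s₃ : ℤ}
    (μ : MMap M N 3 r) (g₁ : MMap L M a s₁) (g₂ : MMap L M b s₂) (g₃ : MMap L M c s₃)
    (h : r + (s₁ + s₂ + s₃) = R := by norm_num) : MMap L N (a + b + c) R :=
  mcast rfl h (comp₃ μ g₁ g₂ g₃)

/-- `μ ∘ (g₁, g₂, g₃, g₄)`, recast to a specified target degree `R`. -/
def fc4 [∀ i, AddCommGroup (N i)] (R : ℤ) {a b c e : ℕ} {r s₁ s₂ s₃ s₄ : ℤ}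
    (μ : MMap M N 4 r) (g₁ : MMap L M a s₁) (g₂ : MMap L M b s₂) (g₃ : MMap L M c s₃)
    (g₄ : MMap L M e s₄) (h : r + (s₁ + s₂ + s₃ + s₄) = R := by norm_num) :
    MMap L N (a + b + c + e) R :=
  mcast rfl h (comp₄ μ g₁ g₂ g₃ g₄)

/-- `∂(μ)`, recast to a specified target degree `R`. -/
def bd [∀ i, AddCommGroup (L i)] [∀ i, AddCommGroup (M i)] (R : ℤ) {m : ℕ} {r : ℤ}
    (D' : MMap M M 1 (-1)) (D : MMap L L 1 (-1)) (μ : MMap L M m r)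
    (h : -1 + r = R := by norm_num) : MMap L M m R :=
  mcast rfl h (bdry D' D μ)

/-- Multilinearity over `k` of the components of an `MMap`. -/
def IsMultilinear (k : Type) [CommRing k] {L M : ℤ → Type} [∀ i, AddCommGroup (L i)]
    [∀ i, AddCommGroup (M i)] [∀ i, Module k (L i)] [∀ i, Module k (M i)] {m : ℕ} {r : ℤ}
    (μ : MMap L M m r) : Prop :=
  ∀ (d : Fin m → ℤ) (x : ∀ j, L (d j)) (j : Fin m),
    (∀ a b : L (d j), μ d (Function.update x j (a + b))
        = μ d (Function.update x j a) + μ d (Function.update x j b)) ∧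
    (∀ (c : k) (a : L (d j)), μ d (Function.update x j (c • a)) = c • μ d (Function.update x j a))

/-! ## Permutations (0-indexed; a cycle `(a b c)` is `swap a b * swap b c`) -/

def P12 (m : ℕ) [NeZero m] : Equiv.Perm (Fin m) := Equiv.swap 0 1
def P13 (m : ℕ) [NeZero m] : Equiv.Perm (Fin m) := Equiv.swap 0 2
def P23 (m : ℕ) [NeZero m] : Equiv.Perm (Fin m) := Equiv.swap 1 2
def P34 (m : ℕ) [NeZero m] : Equiv.Perm (Fin m) := Equiv.swap 2 3
def P123 (m : ℕ) [NeZero m] : Equiv.Perm (Fin m) := Equiv.swap 0 1 * Equiv.swap 1 2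
def P132 (m : ℕ) [NeZero m] : Equiv.Perm (Fin m) := Equiv.swap 0 2 * Equiv.swap 2 1
def P234 (m : ℕ) [NeZero m] : Equiv.Perm (Fin m) := Equiv.swap 1 2 * Equiv.swap 2 3
def P243 (m : ℕ) [NeZero m] : Equiv.Perm (Fin m) := Equiv.swap 1 3 * Equiv.swap 3 2
def P1234 (m : ℕ) [NeZero m] : Equiv.Perm (Fin m) :=
  Equiv.swap 0 1 * Equiv.swap 1 2 * Equiv.swap 2 3
def P1432 (m : ℕ) [NeZero m] : Equiv.Perm (Fin m) :=
  Equiv.swap 0 3 * Equiv.swap 3 2 * Equiv.swap 2 1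
def P1342 (m : ℕ) [NeZero m] : Equiv.Perm (Fin m) :=
  Equiv.swap 0 2 * Equiv.swap 2 3 * Equiv.swap 3 1
def P13P24 (m : ℕ) [NeZero m] : Equiv.Perm (Fin m) := Equiv.swap 0 2 * Equiv.swap 1 3

end WL3
namespace WL3

open Finset

variable (k : Type) [CommRing k]

/-- A Leibniz 3-algebra structure: maps `l2, l3, l4` on a complex with differential `D`
satisfying the generalized Jacobi identities (L1)–(L4). -/
structure IsLeibniz3 {L : ℤ → Type} [∀ i, AddCommGroup (L i)] [∀ i, Module k (L i)]
    (D : MMap L L 1 (-1)) (l2 : MMap L L 2 0) (l3 : MMap L L 3 1) (l4 : MMap L L 4 2) :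
    Prop where
  lin2 : IsMultilinear k l2
  lin3 : IsMultilinear k l3
  lin4 : IsMultilinear k l4
  eqL1 : bd (-1) D D l2 = 0
  eqL2 : bd 0 D D l3 =
    pc 0 1 0 l2 l2 - pc 0 0 1 l2 l2 - pa (P12 3) (pc 0 1 0 l2 l2)
  eqL3 : bd 1 D D l4 =
    pc 1 0 1 l2 l3 + pc 1 1 0 l2 l3 - pa (P12 4) (pc 1 1 0 l2 l3)
      + pa (P123 4) (pc 1 1 0 l2 l3) - pc 1 0 2 l3 l2
      + pc 1 1 1 l3 l2 - pa (P12 4) (pc 1 1 1 l3 l2)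
      - pc 1 2 0 l3 l2 + pa (P23 4) (pc 1 2 0 l3 l2) - pa (P132 4) (pc 1 2 0 l3 l2)
  eqL4 : (0 : MMap L L 5 2) =
    pc 2 0 1 l2 l4 - pc 2 1 0 l2 l4 + pa (P12 5) (pc 2 1 0 l2 l4)
      - pa (P123 5) (pc 2 1 0 l2 l4) + pa (P1234 5) (pc 2 1 0 l2 l4)
      + pc 2 0 2 l3 l3 + pc 2 1 1 l3 l3 - pa (P12 5) (pc 2 1 1 l3 l3)
      + pa (P123 5) (pc 2 1 1 l3 l3) + pc 2 2 0 l3 l3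
      - pa (P23 5) (pc 2 2 0 l3 l3) + pa (P132 5) (pc 2 2 0 l3 l3)
      + pa (P234 5) (pc 2 2 0 l3 l3) - pa (P1342 5) (pc 2 2 0 l3 l3)
      + pa (P13P24 5) (pc 2 2 0 l3 l3)
      + pc 2 0 3 l4 l2 - pc 2 1 2 l4 l2 + pa (P12 5) (pc 2 1 2 l4 l2)
      + pc 2 2 1 l4 l2 - pa (P23 5) (pc 2 2 1 l4 l2) + pa (P132 5) (pc 2 2 1 l4 l2)
      - pc 2 3 0 l4 l2 + pa (P34 5) (pc 2 3 0 l4 l2) - pa (P243 5) (pc 2 3 0 l4 l2)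
      + pa (P1432 5) (pc 2 3 0 l4 l2)

/-- A weak Lie 3-algebra: a 3-term chain complex equipped with structure maps
`l2, l3, l4, l21, l211, l31, l32` satisfying (L1)–(L4) and (W1)–(W11). -/
structure WeakLie3 (L : ℤ → Type) [∀ i, AddCommGroup (L i)] [∀ i, Module k (L i)] where
  D : MMap L L 1 (-1)
  linD : IsMultilinear k D
  dd : fc1 (-2) D D = 0
  bound : ∀ i : ℤ, (i < 0 ∨ 2 < i) → ∀ x : L i, x = 0
  l2 : MMap L L 2 0
  l3 : MMap L L 3 1
  l4 : MMap L L 4 2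
  l21 : MMap L L 2 1
  l211 : MMap L L 2 2
  l31 : MMap L L 3 2
  l32 : MMap L L 3 2
  leib : IsLeibniz3 k D l2 l3 l4
  lin21 : IsMultilinear k l21
  lin211 : IsMultilinear k l211
  lin31 : IsMultilinear k l31
  lin32 : IsMultilinear k l32
  w1 : bd 0 D D l21 = l2 + pa (P12 2) l2
  w2 : bd 1 D D l211 = l21 - pa (P12 2) l21
  w3 : bd 1 D D l31 = l3 + pa (P12 3) l3 + pc 1 0 1 l2 l21
  w4 : bd 1 D D l32 = l3 + pa (P23 3) l3 - pc 1 1 0 l2 l21 + pc 1 0 1 l21 l2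
        + pa (P12 3) (pc 1 1 0 l21 l2)
  w5 : l211 + pa (P12 2) l211 = 0
  w6 : l31 - pa (P12 3) l31 = pc 2 0 1 l2 l211
  w7 : l31 - pa (P12 3) l32 + pa (P132 3) l31 - l32 + pa (P23 3) l31 - pa (P123 3) l32
        = pc 2 1 0 l21 l21 + pc 2 0 1 l21 l21 + pa (P12 3) (pc 2 1 0 l21 l21)
          + pa (P132 3) (pc 2 1 0 l211 l2)
  w8 : l32 - pa (P23 3) l32 = - pc 2 1 0 l2 l211 + pc 2 0 1 l211 l2
        + pa (P12 3) (pc 2 1 0 l211 l2)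
  w9 : l4 + pa (P12 4) l4 = pc 2 0 1 l2 l31 - pc 2 2 0 l31 l2
        + pa (P123 4) (pc 2 1 0 l2 l31) + pc 2 0 2 l3 l21
  w10 : l4 + pa (P23 4) l4 = pc 2 0 1 l2 l32 - pc 2 1 1 l3 l21 + pc 2 1 0 l2 l31
        - pc 2 0 2 l31 l2 - pa (P12 4) (pc 2 1 1 l31 l2) - pa (P132 4) (pc 2 2 0 l31 l2)
  w11 : l4 + pa (P34 4) l4 = pc 2 0 1 l21 l3 - pc 2 0 2 l32 l2 + pc 2 1 1 l32 l2
        - pa (P12 4) (pc 2 1 1 l32 l2) + pc 2 2 0 l3 l21 + pa (P23 4) (pc 2 2 0 l32 l2)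
        - pa (P132 4) (pc 2 2 0 l32 l2) + pc 2 1 0 l2 l32 - pa (P12 4) (pc 2 1 0 l2 l32)
        + pa (P123 4) (pc 2 1 0 l21 l3)

end WL3
namespace WL3

open Finset

variable (k : Type) [CommRing k]

/-- A weak morphism of weak Lie 3-algebras `(f1,f2,f21,f3) : A → B`, i.e. a solution of
equations (M1)–(M8). -/
structure IsWeakMorphism {L M : ℤ → Type} [∀ i, AddCommGroup (L i)] [∀ i, Module k (L i)]
    [∀ i, AddCommGroup (M i)] [∀ i, Module k (M i)]
    (A : WeakLie3 k L) (B : WeakLie3 k M)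
    (f1 : MMap L M 1 0) (f2 : MMap L M 2 1) (f21 : MMap L M 2 2) (f3 : MMap L M 3 2) :
    Prop where
  lin1 : IsMultilinear k f1
  lin2 : IsMultilinear k f2
  lin21 : IsMultilinear k f21
  lin3 : IsMultilinear k f3
  m1 : bd (-1) B.D A.D f1 = 0
  m2 : bd 0 B.D A.D f2 = fc1 0 f1 A.l2 - fc2 0 B.l2 f1 f1
  m3 : bd 1 B.D A.D f3 = fc1 1 f1 A.l3 - pc 1 1 0 f2 A.l2 + pc 1 0 1 f2 A.l2
        + pa (P12 3) (pc 1 1 0 f2 A.l2) - fc3 1 B.l3 f1 f1 f1 - fc2 1 B.l2 f1 f2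
        + fc2 1 B.l2 f2 f1 + pa (P12 3) (fc2 1 B.l2 f1 f2)
  m4 : fc1 2 f1 A.l4 - fc4 2 B.l4 f1 f1 f1 f1 =
        pc 2 0 1 f2 A.l3 + pc 2 1 0 f2 A.l3 - pa (P12 4) (pc 2 1 0 f2 A.l3)
        + pa (P123 4) (pc 2 1 0 f2 A.l3) - pc 2 0 2 f3 A.l2 + pc 2 1 1 f3 A.l2
        - pa (P12 4) (pc 2 1 1 f3 A.l2) - pc 2 2 0 f3 A.l2 + pa (P23 4) (pc 2 2 0 f3 A.l2)
        - pa (P132 4) (pc 2 2 0 f3 A.l2) + fc2 2 B.l2 f3 f1 + fc2 2 B.l2 f1 f3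
        - pa (P12 4) (fc2 2 B.l2 f1 f3) + pa (P123 4) (fc2 2 B.l2 f1 f3)
        - fc2 2 B.l2 f2 f2 + pa (P23 4) (fc2 2 B.l2 f2 f2) - pa (P132 4) (fc2 2 B.l2 f2 f2)
        + fc3 2 B.l3 f2 f1 f1 - fc3 2 B.l3 f1 f2 f1 + pa (P12 4) (fc3 2 B.l3 f1 f2 f1)
        + fc3 2 B.l3 f1 f1 f2 - pa (P23 4) (fc3 2 B.l3 f1 f1 f2)
        + pa (P132 4) (fc3 2 B.l3 f1 f1 f2)
  m5 : bd 1 B.D A.D f21 = - f2 - pa (P12 2) f2 + fc1 1 f1 A.l21 - fc2 1 B.l21 f1 f1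
  m6 : fc1 2 f1 A.l211 - fc2 2 B.l211 f1 f1 = f21 - pa (P12 2) f21
  m7 : fc1 2 f1 A.l31 - fc3 2 B.l31 f1 f1 f1 =
        f3 + pa (P12 3) f3 + pc 2 0 1 f2 A.l21 + fc2 2 B.l2 f21 f1
  m8 : fc1 2 f1 A.l32 - fc3 2 B.l32 f1 f1 f1 =
        f3 + pa (P23 3) f3 - pc 2 1 0 f2 A.l21 + pc 2 0 1 f21 A.l2
        + pa (P12 3) (pc 2 1 0 f21 A.l2) - fc2 2 B.l2 f1 f21 - fc2 2 B.l21 f2 f1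
        - pa (P12 3) (fc2 2 B.l21 f1 f2)

/-- A morphism of (semi-strict) Lie 3-algebras / Leibniz 3-algebras: equations (M1)–(M4)
for structure maps `(a2,a3,a4)` on the source and `(b2,b3,b4)` on the target. -/
structure IsLeibMorphism {L M : ℤ → Type} [∀ i, AddCommGroup (L i)] [∀ i, Module k (L i)]
    [∀ i, AddCommGroup (M i)] [∀ i, Module k (M i)]
    (DL : MMap L L 1 (-1)) (DM : MMap M M 1 (-1))
    (a2 : MMap L L 2 0) (a3 : MMap L L 3 1) (a4 : MMap L L 4 2)
    (b2 : MMap M M 2 0) (b3 : MMap M M 3 1) (b4 : MMap M M 4 2)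
    (f1 : MMap L M 1 0) (f2 : MMap L M 2 1) (f3 : MMap L M 3 2) : Prop where
  lin1 : IsMultilinear k f1
  lin2 : IsMultilinear k f2
  lin3 : IsMultilinear k f3
  m1 : bd (-1) DM DL f1 = 0
  m2 : bd 0 DM DL f2 = fc1 0 f1 a2 - fc2 0 b2 f1 f1
  m3 : bd 1 DM DL f3 = fc1 1 f1 a3 - pc 1 1 0 f2 a2 + pc 1 0 1 f2 a2
        + pa (P12 3) (pc 1 1 0 f2 a2) - fc3 1 b3 f1 f1 f1 - fc2 1 b2 f1 f2
        + fc2 1 b2 f2 f1 + pa (P12 3) (fc2 1 b2 f1 f2)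
  m4 : fc1 2 f1 a4 - fc4 2 b4 f1 f1 f1 f1 =
        pc 2 0 1 f2 a3 + pc 2 1 0 f2 a3 - pa (P12 4) (pc 2 1 0 f2 a3)
        + pa (P123 4) (pc 2 1 0 f2 a3) - pc 2 0 2 f3 a2 + pc 2 1 1 f3 a2
        - pa (P12 4) (pc 2 1 1 f3 a2) - pc 2 2 0 f3 a2 + pa (P23 4) (pc 2 2 0 f3 a2)
        - pa (P132 4) (pc 2 2 0 f3 a2) + fc2 2 b2 f3 f1 + fc2 2 b2 f1 f3
        - pa (P12 4) (fc2 2 b2 f1 f3) + pa (P123 4) (fc2 2 b2 f1 f3)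
        - fc2 2 b2 f2 f2 + pa (P23 4) (fc2 2 b2 f2 f2) - pa (P132 4) (fc2 2 b2 f2 f2)
        + fc3 2 b3 f2 f1 f1 - fc3 2 b3 f1 f2 f1 + pa (P12 4) (fc3 2 b3 f1 f2 f1)
        + fc3 2 b3 f1 f1 f2 - pa (P23 4) (fc3 2 b3 f1 f1 f2)
        + pa (P132 4) (fc3 2 b3 f1 f1 f2)

/-- A deformation retract `(p, i, h)` of `(L, D)` onto `(L', D')`:
`p`, `i` are chain maps, `id - i∘p = D∘h + h∘D` and `p∘i = id`. -/
structure IsDefRetract {L L' : ℤ → Type} [∀ i, AddCommGroup (L i)] [∀ i, Module k (L i)]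
    [∀ i, AddCommGroup (L' i)] [∀ i, Module k (L' i)]
    (D : MMap L L 1 (-1)) (D' : MMap L' L' 1 (-1))
    (p : MMap L L' 1 0) (i : MMap L' L 1 0) (h : MMap L L 1 1) : Prop where
  linp : IsMultilinear k p
  lini : IsMultilinear k i
  linh : IsMultilinear k h
  chainp : bd (-1) D' D p = 0
  chaini : bd (-1) D D' i = 0
  homotopy : idm - fc1 0 i p = fc1 0 D h + fc1 0 h D
  retract : fc1 0 p i = idm

/-- A weak Lie 2-algebra in the sense of Roytenberg (a 2-term truncation of a weak
Lie 3-algebra). -/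
structure WeakLie2 (L : ℤ → Type) [∀ i, AddCommGroup (L i)] [∀ i, Module k (L i)] where
  D : MMap L L 1 (-1)
  linD : IsMultilinear k D
  dd : fc1 (-2) D D = 0
  bound : ∀ i : ℤ, (i < 0 ∨ 1 < i) → ∀ x : L i, x = 0
  l2 : MMap L L 2 0
  l3 : MMap L L 3 1
  l21 : MMap L L 2 1
  lin2 : IsMultilinear k l2
  lin3 : IsMultilinear k l3
  lin21 : IsMultilinear k l21
  e1 : bd (-1) D D l2 = 0
  e2 : bd 0 D D l3 = pc 0 1 0 l2 l2 - pc 0 0 1 l2 l2 - pa (P12 3) (pc 0 1 0 l2 l2)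
  e3 : (0 : MMap L L 4 1) =
    pc 1 0 1 l2 l3 + pc 1 1 0 l2 l3 - pa (P12 4) (pc 1 1 0 l2 l3)
      + pa (P123 4) (pc 1 1 0 l2 l3) - pc 1 0 2 l3 l2
      + pc 1 1 1 l3 l2 - pa (P12 4) (pc 1 1 1 l3 l2)
      - pc 1 2 0 l3 l2 + pa (P23 4) (pc 1 2 0 l3 l2) - pa (P132 4) (pc 1 2 0 l3 l2)
  e4 : bd 0 D D l21 = l2 + pa (P12 2) l2
  e5 : (0 : MMap L L 2 1) = l21 - pa (P12 2) l21
  e6 : (0 : MMap L L 3 1) = l3 + pa (P12 3) l3 + pc 1 0 1 l2 l21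
  e7 : (0 : MMap L L 3 1) = l3 + pa (P23 3) l3 - pc 1 1 0 l2 l21 + pc 1 0 1 l21 l2
        + pa (P12 3) (pc 1 1 0 l21 l2)

end WL3
namespace WL3

open Finset

section Transfer

variable {k : Type} [CommRing k] {L L' : ℤ → Type}
  [∀ i, AddCommGroup (L i)] [∀ i, Module k (L i)]
  [∀ i, AddCommGroup (L' i)] [∀ i, Module k (L' i)]
variable (A : WeakLie3 k L) (p : MMap L L' 1 0) (i : MMap L' L 1 0) (h : MMap L L 1 1)

/-- `h ∘ λ2` -/
def hl2 : MMap L L 2 1 := fc1 1 h A.l2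
/-- `h ∘ λ3` -/
def hl3 : MMap L L 3 2 := fc1 2 h A.l3
/-- `h ∘ λ21` -/
def hl21 : MMap L L 2 2 := fc1 2 h A.l21

/-- Transferred `λ2' = p ∘ λ2 ∘ (i,i)`. -/
def tl2 : MMap L' L' 2 0 := fc1 0 p (fc2 0 A.l2 i i)

/-- Transferred `λ3'`. -/
def tl3 : MMap L' L' 3 1 :=
  fc1 1 p (fc3 1 A.l3 i i i)
  + fc1 1 p (fc3 1 (pc 1 0 1 A.l2 (hl2 A h)
      - (pc 1 1 0 A.l2 (hl2 A h) - pa (P12 3) (pc 1 1 0 A.l2 (hl2 A h)))) i i i)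

/-- Transferred `λ4'`. -/
def tl4 : MMap L' L' 4 2 :=
  fc1 2 p (fc4 2 A.l4 i i i i)
  - fc1 2 p (fc4 2
      (pc 2 0 1 A.l2 (hl3 A h)
        + (pc 2 1 0 A.l2 (hl3 A h) - pa (P12 4) (pc 2 1 0 A.l2 (hl3 A h))
            + pa (P123 4) (pc 2 1 0 A.l2 (hl3 A h)))
        + pc 2 0 2 A.l3 (hl2 A h)
        - (pc 2 1 1 A.l3 (hl2 A h) - pa (P12 4) (pc 2 1 1 A.l3 (hl2 A h)))
        + (pc 2 2 0 A.l3 (hl2 A h) - pa (P23 4) (pc 2 2 0 A.l3 (hl2 A h))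
            + pa (P132 4) (pc 2 2 0 A.l3 (hl2 A h)))) i i i i)
  - fc1 2 p (fc4 2
      (pc 2 0 2 (pc 1 0 1 A.l2 (hl2 A h)) (hl2 A h)
        - (pc 2 1 1 (pc 1 0 1 A.l2 (hl2 A h)) (hl2 A h)
            - pa (P12 4) (pc 2 1 1 (pc 1 0 1 A.l2 (hl2 A h)) (hl2 A h)))
        + (fc2 2 A.l2 (hl2 A h) (hl2 A h) - pa (P23 4) (fc2 2 A.l2 (hl2 A h) (hl2 A h))
            + pa (P132 4) (fc2 2 A.l2 (hl2 A h) (hl2 A h)))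
        + (pc 2 1 1 (pc 1 1 0 A.l2 (hl2 A h)) (hl2 A h)
            - pa (P12 4) (pc 2 1 1 (pc 1 1 0 A.l2 (hl2 A h)) (hl2 A h))
            + pa (P123 4) (pc 2 1 1 (pc 1 1 0 A.l2 (hl2 A h)) (hl2 A h)))
        - (pc 2 2 0 (pc 1 1 0 A.l2 (hl2 A h)) (hl2 A h)
            - pa (P12 4) (pc 2 2 0 (pc 1 1 0 A.l2 (hl2 A h)) (hl2 A h))
            + pa (P123 4) (pc 2 2 0 (pc 1 1 0 A.l2 (hl2 A h)) (hl2 A h))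
            - pa (P23 4) (pc 2 2 0 (pc 1 1 0 A.l2 (hl2 A h)) (hl2 A h))
            + pa (P132 4) (pc 2 2 0 (pc 1 1 0 A.l2 (hl2 A h)) (hl2 A h))
            - pa (P13 4) (pc 2 2 0 (pc 1 1 0 A.l2 (hl2 A h)) (hl2 A h)))) i i i i)

/-- Transferred `λ21' = p ∘ λ21 ∘ (i,i)`. -/
def tl21 : MMap L' L' 2 1 := fc1 1 p (fc2 1 A.l21 i i)

/-- Transferred `λ211' = p ∘ λ211 ∘ (i,i)`. -/
def tl211 : MMap L' L' 2 2 := fc1 2 p (fc2 2 A.l211 i i)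

/-- Transferred `λ31'`. -/
def tl31 : MMap L' L' 3 2 :=
  fc1 2 p (fc3 2 A.l31 i i i) - fc1 2 p (fc3 2 (pc 2 0 1 A.l2 (hl21 A h)) i i i)

/-- Transferred `λ32'`. -/
def tl32 : MMap L' L' 3 2 :=
  fc1 2 p (fc3 2 A.l32 i i i)
  + fc1 2 p (fc3 2 (pc 2 0 1 A.l21 (hl2 A h) + pc 2 1 0 A.l2 (hl21 A h)
      + pa (P12 3) (pc 2 1 0 A.l21 (hl2 A h))) i i i)

/-- Extension of `i`: `i₂ = -h ∘ λ2 ∘ (i,i)`. -/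
def ti2 : MMap L' L 2 1 := - fc1 1 h (fc2 0 A.l2 i i)

/-- Extension of `i`: `i₂₁ = -h ∘ λ21 ∘ (i,i)`. -/
def ti21 : MMap L' L 2 2 := - fc1 2 h (fc2 1 A.l21 i i)

/-- Extension of `i`: `i₃`. -/
def ti3 : MMap L' L 3 2 :=
  - fc1 2 h (fc3 1 A.l3 i i i)
  - fc1 2 h (fc3 1 (pc 1 0 1 A.l2 (hl2 A h)
      - (pc 1 1 0 A.l2 (hl2 A h) - pa (P12 3) (pc 1 1 0 A.l2 (hl2 A h)))) i i i)

end Transfer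

section Skew

variable (k : Type) [CommRing k] [Invertible (2 : k)] [Invertible (3 : k)]
variable {L M : ℤ → Type} [∀ i, AddCommGroup (L i)] [∀ i, Module k (L i)]
  [∀ i, AddCommGroup (M i)] [∀ i, Module k (M i)]

/-- Skew-symmetrization `λ̄2` of a weak Lie 3-algebra. -/
def skew2 (A : WeakLie3 k L) : MMap L L 2 0 :=
  (⅟ (2 : k)) • ∑ σ : Equiv.Perm (Fin 2), (Equiv.Perm.sign σ : ℤ) • pa σ A.l2

/-- Skew-symmetrization `λ̄3` of a weak Lie 3-algebra. -/
def skew3 (A : WeakLie3 k L) : MMap L L 3 1 :=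
  (⅟ (2 : k) * ⅟ (3 : k)) • ∑ σ : Equiv.Perm (Fin 3), (Equiv.Perm.sign σ : ℤ) • pa σ A.l3
  - (⅟ (2 : k) * ⅟ (2 : k) * ⅟ (2 : k) * ⅟ (3 : k)) •
      ∑ σ : Equiv.Perm (Fin 3), (Equiv.Perm.sign σ : ℤ) •
        pa σ (pc 1 0 1 A.l21 A.l2 + pc 1 1 0 A.l21 A.l2)

/-- Skew-symmetrization `λ̄4` of a weak Lie 3-algebra. -/
def skew4 (A : WeakLie3 k L) : MMap L L 4 2 :=
  (⅟ (2 : k) * ⅟ (2 : k) * ⅟ (2 : k) * ⅟ (3 : k)) •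
      ∑ σ : Equiv.Perm (Fin 4), (Equiv.Perm.sign σ : ℤ) • pa σ A.l4
  + (⅟ (2 : k) * ⅟ (2 : k) * ⅟ (2 : k) * ⅟ (2 : k) * ⅟ (3 : k)) •
      ∑ σ : Equiv.Perm (Fin 4), (Equiv.Perm.sign σ : ℤ) •
        pa σ (pc 2 0 1 A.l21 A.l3 - pc 2 0 2 A.l31 A.l2 + pc 2 1 1 A.l32 A.l2
          - pc 2 1 0 A.l21 A.l3 - pc 2 1 1 A.l31 A.l2 + pc 2 2 0 A.l32 A.l2)

/-- Skew-symmetrization `f̄2` of the second component of a weak morphism. -/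
def skewMor2 (f2 : MMap L M 2 1) : MMap L M 2 1 :=
  (⅟ (2 : k)) • ∑ σ : Equiv.Perm (Fin 2), (Equiv.Perm.sign σ : ℤ) • pa σ f2

/-- Skew-symmetrization `f̄3` of the third component of a weak morphism `A → B`. -/
def skewMor3 (A : WeakLie3 k L) (B : WeakLie3 k M) (f1 : MMap L M 1 0) (f2 : MMap L M 2 1)
    (f21 : MMap L M 2 2) (f3 : MMap L M 3 2) : MMap L M 3 2 :=
  (⅟ (2 : k) * ⅟ (3 : k)) • ∑ σ : Equiv.Perm (Fin 3), (Equiv.Perm.sign σ : ℤ) • pa σ f3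
  - (⅟ (2 : k) * ⅟ (2 : k) * ⅟ (2 : k) * ⅟ (3 : k)) •
      ∑ σ : Equiv.Perm (Fin 3), (Equiv.Perm.sign σ : ℤ) •
        pa σ (pc 2 0 1 f21 A.l2 + pc 2 1 0 f21 A.l2
          - fc2 2 B.l21 f2 f1 - fc2 2 B.l21 f1 f2)

end Skew

section Comp

variable {k : Type} [CommRing k] {L M N : ℤ → Type}
  [∀ i, AddCommGroup (L i)] [∀ i, Module k (L i)]
  [∀ i, AddCommGroup (M i)] [∀ i, Module k (M i)]
  [∀ i, AddCommGroup (N i)] [∀ i, Module k (N i)]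

/-- First component of the composition of weak morphisms. -/
def cmp1 (f1' : MMap M N 1 0) (f1 : MMap L M 1 0) : MMap L N 1 0 := fc1 0 f1' f1

/-- Second component of the composition of weak morphisms. -/
def cmp2 (f1' : MMap M N 1 0) (f2' : MMap M N 2 1) (f1 : MMap L M 1 0) (f2 : MMap L M 2 1) :
    MMap L N 2 1 := fc2 1 f2' f1 f1 + fc1 1 f1' f2

/-- `(f'∘f)21` component of the composition of weak morphisms. -/
def cmp21 (f1' : MMap M N 1 0) (f21' : MMap M N 2 2) (f1 : MMap L M 1 0)
    (f21 : MMap L M 2 2) : MMap L N 2 2 := fc2 2 f21' f1 f1 + fc1 2 f1' f21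

/-- Third component of the composition of weak morphisms. -/
def cmp3 (f1' : MMap M N 1 0) (f2' : MMap M N 2 1) (f3' : MMap M N 3 2)
    (f1 : MMap L M 1 0) (f2 : MMap L M 2 1) (f3 : MMap L M 3 2) : MMap L N 3 2 :=
  fc3 2 f3' f1 f1 f1 - fc2 2 f2' f2 f1 + fc2 2 f2' f1 f2 - pa (P12 3) (fc2 2 f2' f1 f2)
    + fc1 2 f1' f3

end Comp

end WL3
namespace WL3

section Cast

variable {L M N : ℤ → Type}

theorem gcast_gcast {i j l : ℤ} (h : i = j) (h' : j = l) (x : M i) :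
    gcast h' (gcast h x) = gcast (h.trans h') x := by
  subst h h'; rfl

theorem gcast_inj {i j : ℤ} (h : i = j) {x y : M i} : gcast h x = gcast h y ↔ x = y := by
  subst h; rfl

theorem gcast_congr {m : ℕ} {r t : ℤ} (μ : MMap L M m r) {d d' : Fin m → ℤ}
    {x : ∀ j, L (d j)} {x' : ∀ j, L (d' j)} (h : r + ∑ j, d j = t) (h' : r + ∑ j, d' j = t)
    (hd : ∀ j, d j = d' j) (hx : ∀ j, gcast (hd j) (x j) = x' j) :
    gcast h (μ d x) = gcast h' (μ d' x') := by
  obtain rfl : d = d' := funext hd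
  obtain rfl : x = x' := funext hx
  rfl

theorem mcast_apply {m : ℕ} {r r' : ℤ} (hr : r = r') (μ : MMap L M m r) (d : Fin m → ℤ)
    (x : ∀ j, L (d j)) : mcast rfl hr μ d x = gcast (by rw [hr]) (μ d x) := by
  subst hr; rfl

variable [∀ i, AddCommGroup (M i)]

theorem gcast_zero {i j : ℤ} (h : i = j) : gcast h (0 : M i) = 0 := by subst h; rfl

theorem gcast_add {i j : ℤ} (h : i = j) (x y : M i) :
    gcast h (x + y) = gcast h x + gcast h y := by subst h; rfl

theorem gcast_sub {i j : ℤ} (h : i = j) (x y : M i) :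
    gcast h (x - y) = gcast h x - gcast h y := by subst h; rfl

theorem gcast_neg {i j : ℤ} (h : i = j) (x : M i) : gcast h (-x) = -gcast h x := by
  subst h; rfl

omit [∀ i, AddCommGroup (M i)] in
theorem gcast_smul {R : Type*} [∀ i, SMul R (M i)] {i j : ℤ} (h : i = j) (c : R) (x : M i) :
    gcast h (c • x) = c • gcast h x := by subst h; rfl

theorem gcast_zsmul {i j : ℤ} (h : i = j) (c : ℤ) (x : M i) :
    gcast h (c • x) = c • gcast h x := by subst h; rfl

theorem gcast_sum {ι : Type*} {i j : ℤ} (h : i = j) (s : Finset ι) (x : ι → M i) :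
    gcast h (∑ a ∈ s, x a) = ∑ a ∈ s, gcast h (x a) := by subst h; rfl

end Cast

/-! ## Maps vanishing as soon as one argument does -/

section PreservesZero

variable {L M N : ℤ → Type} [∀ i, AddCommGroup (L i)] [∀ i, AddCommGroup (M i)]
  [∀ i, AddCommGroup (N i)]

/-- An `MMap` vanishes as soon as one of its arguments does. -/
def PreservesZero {m : ℕ} {r : ℤ} (μ : MMap L M m r) : Prop :=
  ∀ (d : Fin m → ℤ) (x : ∀ j, L (d j)) (j : Fin m), x j = 0 → μ d x = 0

theorem IsMultilinear.preservesZero {k : Type} [CommRing k] [∀ i, Module k (L i)]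
    [∀ i, Module k (M i)] {m : ℕ} {r : ℤ} {μ : MMap L M m r} (hμ : IsMultilinear k μ) :
    PreservesZero μ := by
  intro d x j hj
  have h := (hμ d x j).2 0 0
  rwa [zero_smul, zero_smul, ← hj, Function.update_eq_self] at h

namespace PreservesZero

variable {m : ℕ} {r : ℤ} {μ ν : MMap L M m r}

theorem zero : PreservesZero (0 : MMap L M m r) := fun _ _ _ _ => rfl

theorem add (hμ : PreservesZero μ) (hν : PreservesZero ν) : PreservesZero (μ + ν) :=
  fun d x j hj => by simp [hμ d x j hj, hν d x j hj]

theorem sub (hμ : PreservesZero μ) (hν : PreservesZero ν) : PreservesZero (μ - ν) :=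
  fun d x j hj => by simp [hμ d x j hj, hν d x j hj]

theorem smul {R : Type*} [∀ i, SMulZeroClass R (M i)] (c : R) (hμ : PreservesZero μ) :
    PreservesZero (c • μ) :=
  fun d x j hj => by simp [hμ d x j hj]

theorem zsmul (c : ℤ) (hμ : PreservesZero μ) : PreservesZero (c • μ) :=
  fun d x j hj => by simp [hμ d x j hj]

theorem sum {ι : Type*} (s : Finset ι) {μ : ι → MMap L M m r} (hμ : ∀ i, PreservesZero (μ i)) :
    PreservesZero (∑ i ∈ s, μ i) :=
  Finset.sum_induction μ PreservesZero (fun _ _ => add) zero fun i _ => hμ i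

theorem pa (hμ : PreservesZero μ) (σ : Equiv.Perm (Fin m)) : PreservesZero (pa σ μ) := by
  intro d x j hj
  obtain ⟨i, rfl⟩ := σ.symm.surjective j
  rw [WL3.pa, hμ (fun j => d (σ.symm j)) (fun j => x (σ.symm j)) i hj, gcast_zero, smul_zero]

theorem mcast {m' : ℕ} {r' : ℤ} (hm : m = m') (hr : r = r') (hμ : PreservesZero μ) :
    PreservesZero (mcast hm hr μ) := by
  subst hm hr; exact hμ

theorem fc1 {R s t : ℤ} {a : ℕ} {μ : MMap M N 1 s} {g : MMap L M a t} (hμ : PreservesZero μ)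
    (hg : PreservesZero g) (h : s + t = R) : PreservesZero (fc1 R μ g h) := by
  refine mcast _ _ fun d x j hj => ?_
  rw [comp₁, hμ _ _ 0 (hg d x j hj), gcast_zero]

theorem fc2 {R s s₁ s₂ : ℤ} {a b : ℕ} {μ : MMap M N 2 s} {g₁ : MMap L M a s₁}
    {g₂ : MMap L M b s₂} (hμ : PreservesZero μ) (hg₁ : PreservesZero g₁)
    (hg₂ : PreservesZero g₂) (h : s + (s₁ + s₂) = R) : PreservesZero (fc2 R μ g₁ g₂ h) := by
  refine mcast _ _ fun d x j hj => ?_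
  rw [comp₂]
  induction j using Fin.addCases with
  | left j =>
    rw [hμ _ _ 0, gcast_zero, smul_zero]
    rw [hg₁ _ (fun j => x (Fin.castAdd b j)) j hj]
    rfl
  | right j =>
    rw [hμ _ _ 1, gcast_zero, smul_zero]
    rw [hg₂ _ (fun j => x (Fin.natAdd a j)) j hj]
    rfl

theorem fc3 {R s s₁ s₂ s₃ : ℤ} {a b c : ℕ} {μ : MMap M N 3 s} {g₁ : MMap L M a s₁}
    {g₂ : MMap L M b s₂} {g₃ : MMap L M c s₃} (hμ : PreservesZero μ) (hg₁ : PreservesZero g₁)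
    (hg₂ : PreservesZero g₂) (hg₃ : PreservesZero g₃) (h : s + (s₁ + s₂ + s₃) = R) :
    PreservesZero (fc3 R μ g₁ g₂ g₃ h) := by
  refine mcast _ _ fun d x j hj => ?_
  rw [comp₃]
  induction j using Fin.addCases with
  | left j =>
    induction j using Fin.addCases with
    | left j =>
      rw [hμ _ _ 0, gcast_zero, smul_zero]
      rw [hg₁ _ (fun j => x (Fin.castAdd c (Fin.castAdd b j))) j hj]
      rfl
    | right j =>
      rw [hμ _ _ 1, gcast_zero, smul_zero]
      rw [hg₂ _ (fun j => x (Fin.castAdd c (Fin.natAdd a j))) j hj]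
      rfl
  | right j =>
    rw [hμ _ _ 2, gcast_zero, smul_zero]
    rw [hg₃ _ (fun j => x (Fin.natAdd (a + b) j)) j hj]
    rfl

theorem pc {R s t : ℤ} {m₁ m₂ n : ℕ} {μ : MMap L M (m₁ + 1 + m₂) s} {ν : MMap L L n t}
    (hμ : PreservesZero μ) (hν : PreservesZero ν) (h : s + t = R) :
    PreservesZero (pc R m₁ m₂ μ ν h) := by
  refine mcast _ _ fun d x j hj => ?_
  rw [pcomp]
  induction j using Fin.addCases with
  | left j =>
    induction j using Fin.addCases with
    | left j =>
      rw [hμ _ _ (Fin.castAdd m₂ (Fin.castAdd 1 j)), gcast_zero, smul_zero]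
      simp only [Fin.addCases_left, hj, gcast_zero]
    | right j =>
      rw [hμ _ _ (Fin.castAdd m₂ (Fin.natAdd m₁ 0)), gcast_zero, smul_zero]
      simp only [Fin.addCases_left, Fin.addCases_right]
      rw [hν _ _ j hj, gcast_zero]
  | right j =>
    rw [hμ _ _ (Fin.natAdd (m₁ + 1) j), gcast_zero, smul_zero]
    simp only [Fin.addCases_right, hj, gcast_zero]

/-- Between complexes concentrated in degrees `0, 1, 2`, a map of degree at least `3` is zero. -/
theorem eq_zero_of_three_le (hμ : PreservesZero μ) (hL : ∀ i < 0, ∀ x : L i, x = 0)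
    (hM : ∀ i, 2 < i → ∀ x : M i, x = 0) (hr : 3 ≤ r) : μ = 0 := by
  funext d x
  by_cases hd : ∃ j, d j < 0
  · obtain ⟨j, hj⟩ := hd
    exact hμ d x j (hL _ hj _)
  · push Not at hd
    have := Finset.sum_nonneg fun j (_ : j ∈ Finset.univ) => hd j
    exact hM _ (by omega) _

/-- Between complexes concentrated in degrees `0, 1, 2`, a map of degree `2` is determined by its
component on degree `0` arguments. -/
theorem ext_of_two_le (hμ : PreservesZero μ) (hν : PreservesZero ν)
    (hL : ∀ i < 0, ∀ x : L i, x = 0) (hM : ∀ i, 2 < i → ∀ x : M i, x = 0) (hr : 2 ≤ r)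
    (h : ∀ x : Fin m → L 0, μ (fun _ => 0) x = ν (fun _ => 0) x) : μ = ν := by
  funext d x
  by_cases hd : ∃ j, d j < 0
  · obtain ⟨j, hj⟩ := hd
    rw [hμ d x j (hL _ hj _), hν d x j (hL _ hj _)]
  · push Not at hd
    by_cases hd0 : ∀ j, d j = 0
    · obtain rfl : d = fun _ => 0 := funext hd0
      exact h x
    · push Not at hd0
      obtain ⟨j, hj⟩ := hd0
      have : 0 < ∑ j, d j :=
        Finset.sum_pos' (fun j _ => hd j) ⟨j, Finset.mem_univ j, lt_of_le_of_ne (hd j) hj.symm⟩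
      rw [hM _ (by omega) (μ d x), hM _ (by omega) (ν d x)]

end PreservesZero

theorem bd_zero {R r : ℤ} {m : ℕ} {D' : MMap M M 1 (-1)} (hD' : PreservesZero D')
    (D : MMap L L 1 (-1)) (h : -1 + r = R) : bd R D' D (0 : MMap L M m r) h = 0 := by
  have hc : comp₁ D' (0 : MMap L M m r) = 0 := by
    funext d x
    rw [comp₁, hD' _ _ 0 rfl, gcast_zero]
    rfl
  have hz : ∀ {a b : ℕ} {s t : ℤ} (ha : a = b) (hs : s = t),
      mcast ha hs (0 : MMap L M a s) = 0 := by
    rintro a _ s _ rfl rfl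
    rfl
  have hp : ∀ m₁ m₂ : ℕ, pcomp m₁ m₂ (0 : MMap L M (m₁ + 1 + m₂) r) D = 0 := by
    intro m₁ m₂
    funext d x
    simp only [pcomp, Pi.zero_apply, gcast_zero, smul_zero]
  rw [bd, bdry, hc]
  simp only [hz, hp, Finset.sum_const_zero, smul_zero, sub_zero]

end PreservesZero

/-! ## Evaluation on one, two and three arguments -/

section Eval

variable {L M N : ℤ → Type}

/-- The value of an arity-`1` map at `x`. -/
def ev1 {r i t : ℤ} (μ : MMap L M 1 r) (h : r + i = t) (x : L i) : M t :=
  gcast (by simpa using h) (μ (fun _ => i) (fun _ => x))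

/-- The value of an arity-`2` map at `(x, y)`. -/
def ev2 {r i j t : ℤ} (μ : MMap L M 2 r) (h : r + i + j = t) (x : L i) (y : L j) : M t :=
  gcast (by simp [Fin.sum_univ_two, ← h, add_assoc])
    (μ ![i, j] (Fin.cons x (Fin.cons y fun j => j.elim0)))

/-- The value of an arity-`3` map at elements `x, y, z` of degree `0`. -/
def ev3 {r : ℤ} (μ : MMap L M 3 r) (x y z : L 0) : M r :=
  gcast (by simp) (μ (fun _ => 0) ![x, y, z])

theorem gcast_eq_ev1 {r i t : ℤ} (μ : MMap L M 1 r) {d : Fin 1 → ℤ} {x : ∀ j, L (d j)}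
    (h : r + ∑ j, d j = t) (hi : d 0 = i) :
    gcast h (μ d x) = ev1 μ (by simpa [← hi] using h) (gcast hi (x 0)) :=
  gcast_congr μ _ _ (by simpa using hi) (by rw [Fin.forall_fin_one])

theorem gcast_eq_ev2 {r i j t : ℤ} (μ : MMap L M 2 r) {d : Fin 2 → ℤ} {x : ∀ j, L (d j)}
    (h : r + ∑ j, d j = t) (hi : d 0 = i) (hj : d 1 = j) :
    gcast h (μ d x) = ev2 μ (by simpa [← hi, ← hj, Fin.sum_univ_two, ← add_assoc] using h)
      (gcast hi (x 0)) (gcast hj (x 1)) :=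
  gcast_congr μ _ _ (Fin.forall_fin_two.2 ⟨hi, hj⟩) (Fin.forall_fin_two.2 ⟨rfl, rfl⟩)

theorem gcast_eq_ev2_of_eq {r i j t : ℤ} (μ : MMap L M 2 r) {d : Fin 2 → ℤ} {x : ∀ j, L (d j)}
    (h : r + ∑ j, d j = t) (hi : d 0 = i) (hj : d 1 = j) {x' : L i} {y' : L j}
    (hx : gcast hi (x 0) = x') (hy : gcast hj (x 1) = y') :
    gcast h (μ d x) =
      ev2 μ (by simpa [← hi, ← hj, Fin.sum_univ_two, ← add_assoc] using h) x' y' := by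
  rw [← hx, ← hy, gcast_eq_ev2 μ h hi hj]

theorem gcast_eq_ev3 {r t : ℤ} (μ : MMap L M 3 r) {d : Fin 3 → ℤ} {x : ∀ j, L (d j)}
    (h : r + ∑ j, d j = t) (hd : ∀ j, d j = 0) (ht : r = t) :
    gcast h (μ d x) = gcast ht (ev3 μ (gcast (hd 0) (x 0)) (gcast (hd 1) (x 1))
      (gcast (hd 2) (x 2))) := by
  rw [ev3, gcast_gcast]
  refine gcast_congr μ _ _ hd fun j => ?_
  fin_cases j <;> rfl

theorem gcast_eq_ev3_of_eq {r : ℤ} (μ : MMap L M 3 r) {d : Fin 3 → ℤ} {x : ∀ j, L (d j)}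
    (h : r + ∑ j, d j = r) (h₀ : d 0 = 0) (h₁ : d 1 = 0) (h₂ : d 2 = 0) {x' y' z' : L 0}
    (hx : gcast h₀ (x 0) = x') (hy : gcast h₁ (x 1) = y') (hz : gcast h₂ (x 2) = z') :
    gcast h (μ d x) = ev3 μ x' y' z' := by
  rw [← hx, ← hy, ← hz]
  exact gcast_eq_ev3 μ h (fun j => by fin_cases j <;> assumption) rfl

section Linear

variable [∀ i, AddCommGroup (M i)]

theorem ev2_add {r i j t : ℤ} (μ ν : MMap L M 2 r) (h : r + i + j = t) (x : L i) (y : L j) :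
    ev2 (μ + ν) h x y = ev2 μ h x y + ev2 ν h x y := gcast_add ..

theorem ev2_sub {r i j t : ℤ} (μ ν : MMap L M 2 r) (h : r + i + j = t) (x : L i) (y : L j) :
    ev2 (μ - ν) h x y = ev2 μ h x y - ev2 ν h x y := gcast_sub ..

theorem ev2_neg {r i j t : ℤ} (μ : MMap L M 2 r) (h : r + i + j = t) (x : L i) (y : L j) :
    ev2 (-μ) h x y = -ev2 μ h x y := gcast_neg ..

theorem ev2_zsmul {r i j t : ℤ} (c : ℤ) (μ : MMap L M 2 r) (h : r + i + j = t) (x : L i)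
    (y : L j) : ev2 (c • μ) h x y = c • ev2 μ h x y := gcast_zsmul _ c _

theorem ev2_smul {k : Type} [CommRing k] [∀ i, Module k (M i)] {r i j t : ℤ} (c : k)
    (μ : MMap L M 2 r) (h : r + i + j = t) (x : L i) (y : L j) :
    ev2 (c • μ) h x y = c • ev2 μ h x y := gcast_smul _ c _

theorem ev3_add {r : ℤ} (μ ν : MMap L M 3 r) (x y z : L 0) :
    ev3 (μ + ν) x y z = ev3 μ x y z + ev3 ν x y z := gcast_add ..

theorem ev3_sub {r : ℤ} (μ ν : MMap L M 3 r) (x y z : L 0) :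
    ev3 (μ - ν) x y z = ev3 μ x y z - ev3 ν x y z := gcast_sub ..

theorem ev3_smul {k : Type} [CommRing k] [∀ i, Module k (M i)] {r : ℤ} (c : k)
    (μ : MMap L M 3 r) (x y z : L 0) : ev3 (c • μ) x y z = c • ev3 μ x y z := gcast_smul _ c _

end Linear

section PermutationAction

variable [∀ i, AddCommGroup (M i)]

theorem koszulSign_zero {m : ℕ} (σ : Equiv.Perm (Fin m)) : koszulSign (fun _ => 0) σ = 1 := by
  simp [koszulSign]

theorem ev3_pa {r : ℤ} (σ : Equiv.Perm (Fin 3)) (μ : MMap L M 3 r) (x y z : L 0) :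
    ev3 (pa σ μ) x y z = ev3 μ (![x, y, z] (σ.symm 0)) (![x, y, z] (σ.symm 1))
      (![x, y, z] (σ.symm 2)) := by
  rw [ev3, pa, koszulSign_zero, one_smul, gcast_gcast, gcast_eq_ev3 μ _ (fun _ => rfl) rfl]
  rfl

theorem ev3_pa_P12 {r : ℤ} (μ : MMap L M 3 r) (x y z : L 0) :
    ev3 (pa (P12 3) μ) x y z = ev3 μ y x z := by
  rw [ev3_pa]; rfl

/-- The signed sum of the values of `φ` at all the permutations of `(x, y, z)`. -/
def alternation {X Y : Type} [AddCommGroup Y] (φ : X → X → X → Y) (x y z : X) : Y :=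
  φ x y z - φ y x z - φ z y x - φ x z y + φ y z x + φ z x y

theorem ev3_sum_sign_pa {r : ℤ} (μ : MMap L M 3 r) (x y z : L 0) :
    ev3 (∑ σ : Equiv.Perm (Fin 3), (Equiv.Perm.sign σ : ℤ) • pa σ μ) x y z =
      alternation (ev3 μ) x y z := by
  have hsum : ∀ (s : Finset (Equiv.Perm (Fin 3))) (ν : Equiv.Perm (Fin 3) → MMap L M 3 r),
      ev3 (∑ σ ∈ s, ν σ) x y z = ∑ σ ∈ s, ev3 (ν σ) x y z := by
    intro s ν
    simp only [ev3, Finset.sum_apply, gcast_sum]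
  have huniv : (Finset.univ : Finset (Equiv.Perm (Fin 3))) =
      {1, Equiv.swap 0 1, Equiv.swap 0 2, Equiv.swap 1 2,
        Equiv.swap 0 1 * Equiv.swap 1 2, Equiv.swap 1 2 * Equiv.swap 0 1} := by decide
  have hz : ∀ (c : ℤ) (ν : MMap L M 3 r), ev3 (c • ν) x y z = c • ev3 ν x y z :=
    fun c ν => gcast_zsmul ..
  simp only [hsum, hz, ev3_pa]
  rw [huniv, Finset.sum_insert (by decide), Finset.sum_insert (by decide),
    Finset.sum_insert (by decide), Finset.sum_insert (by decide), Finset.sum_insert (by decide),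
    Finset.sum_singleton]
  simp only [Equiv.Perm.sign_one, Equiv.Perm.sign_mul, Equiv.Perm.sign_swap', Fin.reduceEq,
    if_false, Units.val_one, Units.val_neg, neg_smul, one_smul, mul_neg, mul_one, neg_neg]
  change ev3 μ x y z + (-ev3 μ y x z + (-ev3 μ z y x + (-ev3 μ x z y
    + (ev3 μ z x y + ev3 μ y z x)))) = _
  rw [alternation]
  abel

theorem ev2_pa_P12 {r i j t : ℤ} (μ : MMap L M 2 r) (h : r + i + j = t) (x : L i) (y : L j) :
    ev2 (pa (P12 2) μ) h x y =
      (-1 : ℤ) ^ (i * j).natAbs • ev2 μ (by rw [← h]; ring) y x := by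
  have hs : koszulSign ![i, j] (P12 2) = (-1) ^ (i * j).natAbs := by
    have hf : Finset.univ.filter
        (fun p : Fin 2 × Fin 2 => p.1 < p.2 ∧ P12 2 p.2 < P12 2 p.1) = {(0, 1)} := by decide
    rw [koszulSign, hf, Finset.prod_singleton]
    rfl
  rw [ev2, pa, hs, gcast_zsmul, gcast_gcast, gcast_eq_ev2 μ (i := j) (j := i) _ rfl rfl]
  rfl

theorem ev2_sum_sign_pa {r i j t : ℤ} (μ : MMap L M 2 r) (h : r + i + j = t) (x : L i)
    (y : L j) :
    ev2 (∑ σ : Equiv.Perm (Fin 2), (Equiv.Perm.sign σ : ℤ) • pa σ μ) h x y =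
      ev2 μ h x y - (-1 : ℤ) ^ (i * j).natAbs • ev2 μ (by rw [← h]; ring) y x := by
  have huniv : (Finset.univ : Finset (Equiv.Perm (Fin 2))) = {1, P12 2} := by decide
  have h1 : pa 1 μ = μ := by
    funext d x
    have : koszulSign d 1 = 1 := by
      rw [koszulSign, Finset.prod_eq_one]
      intro p hp
      have hp := (Finset.mem_filter.1 hp).2
      exact absurd hp.1 hp.2.not_gt
    rw [pa, this, one_smul]
    rfl
  have hsign : Equiv.Perm.sign (P12 2) = -1 := by decide
  rw [huniv, Finset.sum_insert (by decide), Finset.sum_singleton, Equiv.Perm.sign_one, hsign, h1,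
    Units.val_one, one_smul, Units.val_neg, Units.val_one, neg_one_smul, ev2_add, ev2_neg,
    ev2_pa_P12, sub_eq_add_neg]

end PermutationAction

section Composition

variable [∀ i, AddCommGroup (L i)] [∀ i, AddCommGroup (M i)] [∀ i, AddCommGroup (N i)]

omit [∀ i, AddCommGroup (L i)] [∀ i, AddCommGroup (M i)] [∀ i, AddCommGroup (N i)] in
theorem ev1_fc1 {R r s i j t : ℤ} (μ : MMap M N 1 r) (g : MMap L M 1 s) (h : r + s = R)
    (hj : s + i = j) (ht : R + i = t) (x : L i) :
    ev1 (fc1 R μ g h) ht x = ev1 μ (by omega) (ev1 g hj x) := by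
  rw [ev1, fc1, mcast_apply, gcast_gcast, comp₁, gcast_gcast,
    gcast_eq_ev1 μ (i := j) _ (by simpa using hj)]
  rfl

omit [∀ i, AddCommGroup (L i)] [∀ i, AddCommGroup (M i)] [∀ i, AddCommGroup (N i)] in
theorem ev2_fc1 {R r s i j l t : ℤ} (μ : MMap M N 1 r) (g : MMap L M 2 s) (h : r + s = R)
    (hl : s + i + j = l) (ht : R + i + j = t) (x : L i) (y : L j) :
    ev2 (fc1 R μ g h) ht x y = ev1 μ (by omega) (ev2 g hl x y) := by
  rw [ev2, fc1, mcast_apply, gcast_gcast, comp₁, gcast_gcast,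
    gcast_eq_ev1 μ (i := l) _ (by simpa [Fin.sum_univ_two, add_assoc] using hl)]
  rfl

omit [∀ i, AddCommGroup (L i)] [∀ i, AddCommGroup (M i)] [∀ i, AddCommGroup (N i)] in
theorem ev3_fc1 {R r s : ℤ} (μ : MMap M N 1 r) (g : MMap L M 3 s) (h : r + s = R)
    (x y z : L 0) : ev3 (fc1 R μ g h) x y z = ev1 μ h (ev3 g x y z) := by
  rw [ev3, fc1, mcast_apply, gcast_gcast, comp₁, gcast_gcast,
    gcast_eq_ev1 μ (i := s) _ (by simp)]
  rfl

omit [∀ i, AddCommGroup (L i)] [∀ i, AddCommGroup (M i)] in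
theorem ev2_fc2 {R r s₁ s₂ i j i' j' t : ℤ} (μ : MMap M N 2 r) (g₁ : MMap L M 1 s₁)
    (g₂ : MMap L M 1 s₂) (h : r + (s₁ + s₂) = R) (hi : s₁ + i = i') (hj : s₂ + j = j')
    (ht : R + i + j = t) (x : L i) (y : L j) :
    ev2 (fc2 R μ g₁ g₂ h) ht x y =
      (-1 : ℤ) ^ (s₂ * i).natAbs • ev2 μ (by omega) (ev1 g₁ hi x) (ev1 g₂ hj y) := by
  rw [ev2, fc2, mcast_apply, gcast_gcast, comp₂, gcast_zsmul, gcast_gcast]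
  refine congrArg₂ (· • ·) (by simp) (gcast_eq_ev2_of_eq μ _ (i := i') (j := j')
    (by simpa using hi) (by simpa using hj) ?_ ?_)
  · exact gcast_eq_ev1 g₁ (d := fun a => ![i, j] (Fin.castAdd 1 a)) (by simpa using hi) rfl
  · exact gcast_eq_ev1 g₂ (d := fun a => ![i, j] (Fin.natAdd 1 a)) (by simpa using hj) rfl

omit [∀ i, AddCommGroup (L i)] [∀ i, AddCommGroup (M i)] in
theorem ev3_fc2_two_one {R r s₁ s₂ : ℤ} (μ : MMap M N 2 r) (g₁ : MMap L M 2 s₁)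
    (g₂ : MMap L M 1 s₂) (h : r + (s₁ + s₂) = R) (x y z : L 0) :
    ev3 (fc2 R μ g₁ g₂ h) x y z =
      ev2 μ (by omega) (ev2 (t := s₁) g₁ (by simp) x y) (ev1 g₂ (add_zero s₂) z) := by
  rw [ev3, fc2, mcast_apply, gcast_gcast, comp₂, gcast_zsmul, gcast_gcast]
  refine (congrArg₂ (· • ·) (x' := (1 : ℤ)) (by simp) ?_).trans (one_zsmul _)
  exact gcast_eq_ev2_of_eq μ _ (i := s₁) (j := s₂) (by simp) (by simp)
    (gcast_eq_ev2 g₁ (d := fun _ => 0) (by simp) rfl rfl)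
    (gcast_eq_ev1 g₂ (d := fun _ => 0) (by simp) rfl)

omit [∀ i, AddCommGroup (L i)] [∀ i, AddCommGroup (M i)] in
theorem ev3_fc2_one_two {R r s₁ s₂ : ℤ} (μ : MMap M N 2 r) (g₁ : MMap L M 1 s₁)
    (g₂ : MMap L M 2 s₂) (h : r + (s₁ + s₂) = R) (x y z : L 0) :
    ev3 (fc2 R μ g₁ g₂ h) x y z =
      ev2 μ (by omega) (ev1 g₁ (add_zero s₁) x) (ev2 (t := s₂) g₂ (by simp) y z) := by
  rw [ev3, fc2, mcast_apply, gcast_gcast, comp₂, gcast_zsmul, gcast_gcast]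
  refine (congrArg₂ (· • ·) (x' := (1 : ℤ)) (by simp) ?_).trans (one_zsmul _)
  exact gcast_eq_ev2_of_eq μ _ (i := s₁) (j := s₂) (by simp) (by simp)
    (gcast_eq_ev1 g₁ (d := fun _ => 0) (by simp) rfl)
    (gcast_eq_ev2 g₂ (d := fun _ => 0) (by simp) rfl rfl)

omit [∀ i, AddCommGroup (L i)] [∀ i, AddCommGroup (M i)] in
theorem ev3_fc3 (μ : MMap M N 3 2) (g₁ g₂ g₃ : MMap L M 1 0) (x y z : L 0) :
    ev3 (fc3 2 μ g₁ g₂ g₃) x y z =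
      ev3 μ (ev1 g₁ (add_zero 0) x) (ev1 g₂ (add_zero 0) y) (ev1 g₃ (add_zero 0) z) := by
  rw [ev3, fc3, mcast_apply, gcast_gcast, comp₃, gcast_zsmul, gcast_gcast]
  refine (congrArg₂ (· • ·) (x' := (1 : ℤ)) (by simp) ?_).trans (one_zsmul _)
  exact gcast_eq_ev3_of_eq μ _ (by simp) (by simp) (by simp)
    (gcast_eq_ev1 g₁ (d := fun _ => 0) (by simp) rfl)
    (gcast_eq_ev1 g₂ (d := fun _ => 0) (by simp) rfl)
    (gcast_eq_ev1 g₃ (d := fun _ => 0) (by simp) rfl)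

theorem ev3_pc_left {R r s : ℤ} (μ : MMap L M 2 r) (ν : MMap L L 2 s)
    (h : r + s = R) (x y z : L 0) :
    ev3 (pc R 0 1 μ ν h) x y z = ev2 μ (by omega) (ev2 (t := s) ν (by simp) x y) z := by
  rw [ev3, pc, mcast_apply, gcast_gcast, pcomp, gcast_zsmul, gcast_gcast]
  refine (congrArg₂ (· • ·) (x' := (1 : ℤ)) (by simp) ?_).trans (one_zsmul _)
  exact gcast_eq_ev2_of_eq μ _ (i := s) (j := 0)
    (by simp [outDeg, Fin.append, Fin.addCases]) rfl
    (gcast_eq_ev2 ν (d := fun _ => 0) (by simp) rfl rfl) rfl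

theorem ev3_pc_right {R r s : ℤ} (μ : MMap L M 2 r) (ν : MMap L L 2 s)
    (h : r + s = R) (x y z : L 0) :
    ev3 (pc R 1 0 μ ν h) x y z = ev2 μ (by omega) x (ev2 (t := s) ν (by simp) y z) := by
  rw [ev3, pc, mcast_apply, gcast_gcast, pcomp, gcast_zsmul, gcast_gcast]
  refine (congrArg₂ (· • ·) (x' := (1 : ℤ)) (by simp) ?_).trans (one_zsmul _)
  exact gcast_eq_ev2_of_eq μ _ (i := 0) (j := s) rfl
    (by simp [outDeg, Fin.append, Fin.addCases]) rfl
    (gcast_eq_ev2 ν (d := fun _ => 0) (by simp) rfl rfl)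

theorem ev2_bd {R r i j i' j' l t : ℤ} (D' : MMap M M 1 (-1)) (D : MMap L L 1 (-1))
    (μ : MMap L M 2 r) (h : -1 + r = R) (hi : -1 + i = i') (hj : -1 + j = j')
    (hl : r + i + j = l) (ht : R + i + j = t) (x : L i) (y : L j) :
    ev2 (bd R D' D μ h) ht x y = ev1 D' (by omega) (ev2 μ hl x y)
      - (-1 : ℤ) ^ r.natAbs • (ev2 μ (by omega) (ev1 D hi x) y
        + (-1 : ℤ) ^ i.natAbs • ev2 μ (by omega) x (ev1 D hj y)) := by
  have hleft : ∀ ht' : R + i + j = t,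
      ev2 (mcast rfl (by omega) (pcomp 0 1 μ D) : MMap L M 2 R) ht' x y =
      ev2 μ (by omega) (ev1 D hi x) y := by
    intro ht'
    rw [ev2, mcast_apply, gcast_gcast, pcomp, gcast_zsmul, gcast_gcast]
    refine (congrArg₂ (· • ·) (x' := (1 : ℤ)) (by simp) ?_).trans (one_zsmul _)
    exact gcast_eq_ev2_of_eq μ _ (i := i') (j := j)
      (by simpa [outDeg, Fin.append, Fin.addCases] using hi) rfl
      (gcast_eq_ev1 D (d := fun a => ![i, j] (Fin.castAdd 1 (Fin.natAdd 0 a)))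
        (by simpa using hi) rfl) rfl
  have hright : ∀ ht' : R + i + j = t,
      ev2 (mcast rfl (by omega) (pcomp 1 0 μ D) : MMap L M 2 R) ht' x y =
      (-1 : ℤ) ^ i.natAbs • ev2 μ (by omega) x (ev1 D hj y) := by
    intro ht'
    rw [ev2, mcast_apply, gcast_gcast, pcomp, gcast_zsmul, gcast_gcast]
    refine congrArg₂ (· • ·) (by simp) (gcast_eq_ev2_of_eq μ _ (i := i) (j := j') rfl
      (by simpa [outDeg, Fin.append, Fin.addCases] using hj) rfl ?_)
    exact gcast_eq_ev1 D (d := fun a => ![i, j] (Fin.natAdd 1 a)) (by simpa using hj) rfl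
  have hbd : bd R D' D μ h = fc1 R D' μ h - (-1 : ℤ) ^ r.natAbs •
      (mcast rfl (by omega) (pcomp 0 1 μ D) + mcast rfl (by omega) (pcomp 1 0 μ D)) := by
    subst h
    rw [bd, bdry, Fin.sum_univ_two]
    rfl
  rw [hbd, ev2_sub, ev2_fc1 D' μ h hl ht, ev2_zsmul, ev2_add, hleft, hright]

end Composition

end Eval

section Bundled

variable {k : Type} [CommRing k] {L M : ℤ → Type} [∀ i, AddCommGroup (L i)]
  [∀ i, AddCommGroup (M i)] [∀ i, Module k (L i)] [∀ i, Module k (M i)]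

/-- `ev1` of a multilinear map, as a linear map. -/
def IsMultilinear.linearMap {r i t : ℤ} {μ : MMap L M 1 r} (hμ : IsMultilinear k μ)
    (h : r + i = t) : L i →ₗ[k] M t where
  toFun := ev1 μ h
  map_add' x y := by
    have hu : ∀ z : L i, Function.update (fun _ : Fin 1 => x) 0 z = fun _ => z := fun z => by
      funext j; rw [Subsingleton.elim j 0, Function.update_self]
    have := (hμ (fun _ => i) (fun _ => x) 0).1 x y
    rw [hu, hu, hu] at this
    rw [ev1, this, gcast_add]; rfl
  map_smul' c x := by
    have hu : ∀ z : L i, Function.update (fun _ : Fin 1 => x) 0 z = fun _ => z := fun z => by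
      funext j; rw [Subsingleton.elim j 0, Function.update_self]
    have := (hμ (fun _ => i) (fun _ => x) 0).2 c x
    rw [hu, hu] at this
    rw [ev1, this, gcast_smul]; rfl

omit [∀ i, AddCommGroup (L i)] [∀ i, AddCommGroup (M i)] in
theorem gcast_update_zero {r i j t : ℤ} (μ : MMap L M 2 r) (h : r + i + j = t) (x z : L i)
    (y : L j) :
    gcast (by simp [Fin.sum_univ_two, ← h, add_assoc]) (μ ![i, j]
      (Function.update (Fin.cons x (Fin.cons y fun j => j.elim0)) 0 z)) = ev2 μ h z y := by
  rw [ev2]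
  congr 2
  funext a; fin_cases a <;> rfl

omit [∀ i, AddCommGroup (L i)] [∀ i, AddCommGroup (M i)] in
theorem gcast_update_one {r i j t : ℤ} (μ : MMap L M 2 r) (h : r + i + j = t) (x : L i)
    (y z : L j) :
    gcast (by simp [Fin.sum_univ_two, ← h, add_assoc]) (μ ![i, j]
      (Function.update (Fin.cons x (Fin.cons y fun j => j.elim0)) 1 z)) = ev2 μ h x z := by
  rw [ev2]
  congr 2
  funext a; fin_cases a <;> rfl

/-- `ev2` of a multilinear map, as a bilinear map. -/
def IsMultilinear.bilinearMap {r i j t : ℤ} {μ : MMap L M 2 r} (hμ : IsMultilinear k μ)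
    (h : r + i + j = t) : L i →ₗ[k] L j →ₗ[k] M t :=
  LinearMap.mk₂ k (ev2 μ h)
    (fun x x' y => by
      rw [← gcast_update_zero μ h x (x + x') y, ← gcast_update_zero μ h x x y,
        ← gcast_update_zero μ h x x' y, ← gcast_add]
      exact congrArg _ ((hμ ![i, j] (Fin.cons x (Fin.cons y fun j => j.elim0)) 0).1 x x'))
    (fun c x y => by
      rw [← gcast_update_zero μ h x (c • x) y, ← gcast_update_zero μ h x x y, ← gcast_smul]
      exact congrArg _ ((hμ ![i, j] (Fin.cons x (Fin.cons y fun j => j.elim0)) 0).2 c x))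
    (fun x y y' => by
      rw [← gcast_update_one μ h x y (y + y'), ← gcast_update_one μ h x y y,
        ← gcast_update_one μ h x y y', ← gcast_add]
      exact congrArg _ ((hμ ![i, j] (Fin.cons x (Fin.cons y fun j => j.elim0)) 1).1 y y'))
    (fun c x y => by
      rw [← gcast_update_one μ h x y (c • y), ← gcast_update_one μ h x y y, ← gcast_smul]
      exact congrArg _ ((hμ ![i, j] (Fin.cons x (Fin.cons y fun j => j.elim0)) 1).2 c y))

theorem IsMultilinear.linearMap_apply {r i t : ℤ} {μ : MMap L M 1 r} (hμ : IsMultilinear k μ)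
    (h : r + i = t) (x : L i) : hμ.linearMap h x = ev1 μ h x := rfl

theorem IsMultilinear.bilinearMap_apply {r i j t : ℤ} {μ : MMap L M 2 r}
    (hμ : IsMultilinear k μ) (h : r + i + j = t) (x : L i) (y : L j) :
    hμ.bilinearMap h x y = ev2 μ h x y := rfl

end Bundled

section WeakMorphism

variable {k : Type} [CommRing k] {L M N : ℤ → Type}
  [∀ i, AddCommGroup (L i)] [∀ i, Module k (L i)]
  [∀ i, AddCommGroup (M i)] [∀ i, Module k (M i)]
  [∀ i, AddCommGroup (N i)] [∀ i, Module k (N i)]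
  {A : WeakLie3 k L} {B : WeakLie3 k M} {C : WeakLie3 k N}
  {f1 : MMap L M 1 0} {f2 : MMap L M 2 1} {f21 : MMap L M 2 2} {f3 : MMap L M 3 2}

theorem ev1_D_eq_zero (A : WeakLie3 k L) {t : ℤ} (h : -1 + 0 = t) (x : L 0) :
    ev1 A.D h x = 0 := A.bound _ (.inl (by omega)) _

theorem IsWeakMorphism.ev2_m2 (hf : IsWeakMorphism k A B f1 f2 f21 f3) (x y : L 0) :
    ev1 B.D (t := 0) (by norm_num) (ev2 (t := 1) f2 (by norm_num) x y) =
      ev1 f1 (add_zero 0) (ev2 (t := 0) A.l2 (by norm_num) x y)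
        - ev2 (t := 0) B.l2 (by norm_num) (ev1 f1 (add_zero 0) x) (ev1 f1 (add_zero 0) y) := by
  have h := congrArg (fun μ => ev2 (t := 0) μ (by norm_num) x y) hf.m2
  rw [ev2_sub, ev2_fc1 f1 A.l2 _ (show (0 : ℤ) + 0 + 0 = 0 by norm_num),
    ev2_fc2 B.l2 f1 f1 _ (add_zero 0) (add_zero 0)] at h
  rw [ev2_bd (i' := -1) (j' := -1) (l := 1) (hi := by norm_num) (hj := by norm_num) (hl := by norm_num),
    ev1_D_eq_zero, ev1_D_eq_zero,
    ← hf.lin2.bilinearMap_apply _ 0 y, ← hf.lin2.bilinearMap_apply _ x 0,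
    map_zero, map_zero] at h
  simpa using h

theorem IsWeakMorphism.ev2_m5_left (hf : IsWeakMorphism k A B f1 f2 f21 f3) (u : L 1)
    (v : L 0) :
    ev2 (t := 2) f21 (by norm_num) (ev1 (t := 0) A.D (by norm_num) u) v
      + ev1 f1 (zero_add 2) (ev2 (t := 2) A.l21 (by norm_num) u v)
      - ev2 (t := 2) B.l21 (by norm_num) (ev1 f1 (zero_add 1) u) (ev1 f1 (add_zero 0) v) =
    ev2 (t := 2) f2 (by norm_num) u v + ev2 (t := 2) f2 (by norm_num) v u := by
  have h := congrArg (fun μ => ev2 (t := 2) μ (by norm_num) u v) hf.m5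
  rw [ev2_sub, ev2_add, ev2_sub, ev2_neg, ev2_pa_P12,
    ev2_fc1 f1 A.l21 _ (show (1 : ℤ) + 1 + 0 = 2 by norm_num),
    ev2_fc2 B.l21 f1 f1 _ (zero_add 1) (add_zero 0)] at h
  rw [ev2_bd (i' := 0) (j' := -1) (l := 3) (hi := by norm_num) (hj := by norm_num)
      (hl := by norm_num),
    ev1_D_eq_zero A, B.bound 3 (by norm_num) (ev2 f21 _ u v),
    ← hf.lin21.bilinearMap_apply _ u 0, ← B.linD.linearMap_apply, map_zero, map_zero] at h
  simp at h
  linear_combination (norm := module) (-1 : ℤ) • h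

theorem IsWeakMorphism.ev2_m5_right (hf : IsWeakMorphism k A B f1 f2 f21 f3) (v : L 0)
    (u : L 1) :
    ev2 (t := 2) f21 (by norm_num) v (ev1 (t := 0) A.D (by norm_num) u)
      + ev1 f1 (zero_add 2) (ev2 (t := 2) A.l21 (by norm_num) v u)
      - ev2 (t := 2) B.l21 (by norm_num) (ev1 f1 (add_zero 0) v) (ev1 f1 (zero_add 1) u) =
    ev2 (t := 2) f2 (by norm_num) v u + ev2 (t := 2) f2 (by norm_num) u v := by
  have h := congrArg (fun μ => ev2 (t := 2) μ (by norm_num) v u) hf.m5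
  rw [ev2_sub, ev2_add, ev2_sub, ev2_neg, ev2_pa_P12,
    ev2_fc1 f1 A.l21 _ (show (1 : ℤ) + 0 + 1 = 2 by norm_num),
    ev2_fc2 B.l21 f1 f1 _ (add_zero 0) (zero_add 1)] at h
  rw [ev2_bd (i' := -1) (j' := 0) (l := 3) (hi := by norm_num) (hj := by norm_num)
      (hl := by norm_num),
    ev1_D_eq_zero A, B.bound 3 (by norm_num) (ev2 f21 _ v u),
    ← hf.lin21.bilinearMap_apply _ 0 u, ← B.linD.linearMap_apply, map_zero, map_zero] at h
  simp at h
  linear_combination (norm := module) (-1 : ℤ) • h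

end WeakMorphism

section Composite

variable {k : Type} [CommRing k] {L M N : ℤ → Type}
  [∀ i, AddCommGroup (L i)] [∀ i, Module k (L i)]
  [∀ i, AddCommGroup (M i)] [∀ i, Module k (M i)]
  [∀ i, AddCommGroup (N i)] [∀ i, Module k (N i)]

omit [∀ i, AddCommGroup (L i)] [∀ i, AddCommGroup (M i)] in
theorem ev2_cmp2 {f1' : MMap M N 1 0} {f2' : MMap M N 2 1} {f1 : MMap L M 1 0}
    {f2 : MMap L M 2 1} {i j t : ℤ} (h : 1 + i + j = t) (x : L i) (y : L j) :
    ev2 (cmp2 f1' f2' f1 f2) h x y =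
      ev2 f2' h (ev1 f1 (zero_add i) x) (ev1 f1 (zero_add j) y)
        + ev1 f1' (zero_add t) (ev2 f2 h x y) := by
  rw [cmp2, ev2_add, ev2_fc2 f2' f1 f1 _ (zero_add i) (zero_add j), ev2_fc1 f1' f2 _ h,
    zero_mul, Int.natAbs_zero, pow_zero, one_smul]

omit [∀ i, AddCommGroup (L i)] [∀ i, AddCommGroup (M i)] in
theorem ev3_cmp3 (f1' : MMap M N 1 0) (f2' : MMap M N 2 1) (f3' : MMap M N 3 2)
    (f1 : MMap L M 1 0) (f2 : MMap L M 2 1) (f3 : MMap L M 3 2) (x y z : L 0) :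
    ev3 (cmp3 f1' f2' f3' f1 f2 f3) x y z =
      ev3 f3' (ev1 f1 (add_zero 0) x) (ev1 f1 (add_zero 0) y) (ev1 f1 (add_zero 0) z)
        - ev3 (fc2 2 f2' f2 f1) x y z + ev3 (fc2 2 f2' f1 f2) x y z
        - ev3 (fc2 2 f2' f1 f2) y x z + ev1 f1' (zero_add 2) (ev3 f3 x y z) := by
  rw [cmp3, ev3_add, ev3_sub, ev3_add, ev3_sub, ev3_fc3, ev3_fc1, ev3_pa_P12]

/-- The correction term in the skew-symmetrization of the third component of a weak morphism, on
elements of degree `0`. -/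
def skewCorrection (A : WeakLie3 k L) (B : WeakLie3 k M) (f1 : MMap L M 1 0)
    (f2 : MMap L M 2 1) (f21 : MMap L M 2 2) (x y z : L 0) : M 2 :=
  ev2 f21 (by norm_num) (ev2 (t := 0) A.l2 (by norm_num) x y) z
    + ev2 f21 (by norm_num) x (ev2 (t := 0) A.l2 (by norm_num) y z)
    - ev2 B.l21 (by norm_num) (ev2 (t := 1) f2 (by norm_num) x y) (ev1 f1 (add_zero 0) z)
    - ev2 B.l21 (by norm_num) (ev1 f1 (add_zero 0) x) (ev2 (t := 1) f2 (by norm_num) y z)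

theorem skewCorrection_comp {A : WeakLie3 k L} {B : WeakLie3 k M} {C : WeakLie3 k N}
    {f1 : MMap L M 1 0} {f2 : MMap L M 2 1} {f21 : MMap L M 2 2} {f3 : MMap L M 3 2}
    (hf : IsWeakMorphism k A B f1 f2 f21 f3)
    {f1' : MMap M N 1 0} {f2' : MMap M N 2 1} {f21' : MMap M N 2 2} {f3' : MMap M N 3 2}
    (hf' : IsWeakMorphism k B C f1' f2' f21' f3') (x y z : L 0) :
    skewCorrection A C (cmp1 f1' f1) (cmp2 f1' f2' f1 f2) (cmp21 f1' f21' f1 f21) x y z =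
      skewCorrection B C f1' f2' f21' (ev1 f1 (add_zero 0) x) (ev1 f1 (add_zero 0) y)
          (ev1 f1 (add_zero 0) z)
        + ev1 f1' (zero_add 2) (skewCorrection A B f1 f2 f21 x y z)
        + ev3 (fc2 2 f2' f2 f1) x y z + ev3 (fc2 2 f2' f1 f2) z x y
        + ev3 (fc2 2 f2' f1 f2) x y z + ev3 (fc2 2 f2' f2 f1) y z x := by
  have hl := hf'.ev2_m5_left (ev2 (t := 1) f2 (by norm_num) x y) (ev1 f1 (add_zero 0) z)
  have hr := hf'.ev2_m5_right (ev1 f1 (add_zero 0) x) (ev2 (t := 1) f2 (by norm_num) y z)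
  rw [hf.ev2_m2, ← hf'.lin21.bilinearMap_apply] at hl hr
  rw [map_sub] at hl hr
  rw [LinearMap.sub_apply] at hl
  simp only [IsMultilinear.bilinearMap_apply] at hl hr
  have h21 : ∀ u v : L 0, ev2 (t := 2) (cmp21 f1' f21' f1 f21) (by norm_num) u v =
      ev2 f21' (by norm_num) (ev1 f1 (add_zero 0) u) (ev1 f1 (add_zero 0) v)
        + ev1 f1' (zero_add 2) (ev2 f21 (by norm_num) u v) := by
    intro u v
    rw [cmp21, ev2_add, ev2_fc2 f21' f1 f1 _ (add_zero 0) (add_zero 0),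
      ev2_fc1 f1' f21 _ (show (2 : ℤ) + 0 + 0 = 2 by norm_num),
      zero_mul, Int.natAbs_zero, pow_zero, one_smul]
  have h1 : ∀ u : L 0, ev1 (cmp1 f1' f1) (add_zero 0) u =
      ev1 f1' (add_zero 0) (ev1 f1 (add_zero 0) u) := fun u => ev1_fc1 f1' f1 _ (add_zero 0) _ u
  rw [ev3_fc2_two_one, ev3_fc2_two_one, ev3_fc2_one_two, ev3_fc2_one_two]
  simp only [skewCorrection, h21, h1, ev2_cmp2]
  simp only [← hf'.lin1.linearMap_apply, ← C.lin21.bilinearMap_apply, map_add, map_sub,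
    LinearMap.add_apply]
  simp only [IsMultilinear.bilinearMap_apply, IsMultilinear.linearMap_apply]
  linear_combination (norm := module) (1 : ℤ) • hl + (1 : ℤ) • hr

end Composite

section SkewSymmetrization

variable (k : Type) [CommRing k] [Invertible (2 : k)] {L M N : ℤ → Type}
  [∀ i, AddCommGroup (L i)] [∀ i, Module k (L i)]
  [∀ i, AddCommGroup (M i)] [∀ i, Module k (M i)]
  [∀ i, AddCommGroup (N i)] [∀ i, Module k (N i)]

omit [∀ i, AddCommGroup (L i)] [∀ i, Module k (L i)] in
theorem ev2_skewMor2 {i j t : ℤ} (f2 : MMap L M 2 1) (h : 1 + i + j = t) (x : L i) (y : L j) :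
    ev2 (skewMor2 k f2) h x y =
      ⅟(2 : k) • (ev2 f2 h x y
        - (-1 : ℤ) ^ (i * j).natAbs • ev2 f2 (by rw [← h]; ring) y x) := by
  rw [skewMor2, ev2_smul, ev2_sum_sign_pa]

omit [∀ i, AddCommGroup (L i)] [∀ i, Module k (L i)] in
theorem skewMor2_cmp2 {f1' : MMap M N 1 0} (hf1' : IsMultilinear k f1') (f2' : MMap M N 2 1)
    (f1 : MMap L M 1 0) (f2 : MMap L M 2 1) :
    skewMor2 k (cmp2 f1' f2' f1 f2) =
      fc2 1 (skewMor2 k f2') f1 f1 + fc1 1 f1' (skewMor2 k f2) := by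
  have ext2 : ∀ {μ ν : MMap L N 2 1}, (∀ (i j : ℤ) (x : L i) (y : L j),
      ev2 (t := 1 + i + j) μ rfl x y = ev2 (t := 1 + i + j) ν rfl x y) → μ = ν := by
    intro μ ν h
    funext d x
    have hd : 1 + ∑ j, d j = 1 + d 0 + d 1 := by rw [Fin.sum_univ_two, add_assoc]
    rw [← gcast_inj hd, gcast_eq_ev2 μ hd rfl rfl, gcast_eq_ev2 ν hd rfl rfl]
    exact h ..
  refine ext2 fun i j x y => ?_
  have hji : 1 + j + i = 1 + i + j := by ring
  rw [ev2_add, ev2_fc2 _ f1 f1 _ (zero_add i) (zero_add j), ev2_fc1 f1' _ _ rfl, ev2_skewMor2,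
    ev2_skewMor2, ev2_skewMor2, ev2_cmp2, ev2_cmp2, ← hf1'.linearMap_apply,
    ← hf1'.linearMap_apply, ← hf1'.linearMap_apply, map_smul, map_sub, map_zsmul,
    zero_mul, Int.natAbs_zero, pow_zero, one_smul]
  module

theorem ev3_skewMor3 [Invertible (3 : k)] (A : WeakLie3 k L) (B : WeakLie3 k M) (f1 : MMap L M 1 0)
    (f2 : MMap L M 2 1) (f21 : MMap L M 2 2) (f3 : MMap L M 3 2) (x y z : L 0) :
    ev3 (skewMor3 k A B f1 f2 f21 f3) x y z =
      (⅟(2 : k) * ⅟(3 : k)) • alternation (ev3 f3) x y z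
        - (⅟(2 : k) * ⅟(2 : k) * ⅟(2 : k) * ⅟(3 : k)) •
          alternation (skewCorrection A B f1 f2 f21) x y z := by
  have h : ev3 (pc 2 0 1 f21 A.l2 + pc 2 1 0 f21 A.l2 - fc2 2 B.l21 f2 f1
      - fc2 2 B.l21 f1 f2 : MMap L M 3 2) = skewCorrection A B f1 f2 f21 := by
    funext x y z
    rw [ev3_sub, ev3_sub, ev3_add, ev3_pc_left, ev3_pc_right, ev3_fc2_two_one,
      ev3_fc2_one_two]
    rfl
  rw [skewMor3, ev3_sub, ev3_smul, ev3_smul, ev3_sum_sign_pa, ev3_sum_sign_pa]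
  exact congrArg (fun φ => _ - _ • alternation φ x y z) h


omit [∀ i, AddCommGroup (L i)] [∀ i, Module k (L i)] in
theorem ev3_fc2_skewMor2_left {f2' : MMap M N 2 1} (hf2' : IsMultilinear k f2')
    (f1 : MMap L M 1 0) (f2 : MMap L M 2 1) (x y z : L 0) :
    ev3 (fc2 2 (skewMor2 k f2') (skewMor2 k f2) f1) x y z =
      (⅟(2 : k) * ⅟(2 : k)) •
        (ev3 (fc2 2 f2' f2 f1) x y z - ev3 (fc2 2 f2' f2 f1) y x z
          - ev3 (fc2 2 f2' f1 f2) z x y + ev3 (fc2 2 f2' f1 f2) z y x) := by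
  rw [ev3_fc2_two_one, ev3_fc2_two_one, ev3_fc2_two_one, ev3_fc2_one_two, ev3_fc2_one_two,
    ev2_skewMor2, ev2_skewMor2]
  simp only [mul_zero, Int.natAbs_zero, pow_zero, one_smul, ← hf2'.bilinearMap_apply,
    map_smul, map_sub, LinearMap.smul_apply, LinearMap.sub_apply]
  module

omit [∀ i, AddCommGroup (L i)] [∀ i, Module k (L i)] in
theorem ev3_fc2_skewMor2_right {f2' : MMap M N 2 1} (hf2' : IsMultilinear k f2')
    (f1 : MMap L M 1 0) (f2 : MMap L M 2 1) (x y z : L 0) :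
    ev3 (fc2 2 (skewMor2 k f2') f1 (skewMor2 k f2)) x y z =
      (⅟(2 : k) * ⅟(2 : k)) •
        (ev3 (fc2 2 f2' f1 f2) x y z - ev3 (fc2 2 f2' f1 f2) x z y
          - ev3 (fc2 2 f2' f2 f1) y z x + ev3 (fc2 2 f2' f2 f1) z y x) := by
  rw [ev3_fc2_two_one, ev3_fc2_two_one, ev3_fc2_one_two, ev3_fc2_one_two, ev3_fc2_one_two,
    ev2_skewMor2, ev2_skewMor2]
  simp only [zero_mul, mul_zero, Int.natAbs_zero, pow_zero, one_smul, ← hf2'.bilinearMap_apply,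
    map_smul, map_sub, LinearMap.smul_apply, LinearMap.sub_apply]
  module

theorem ev3_skewMor3_comp [Invertible (3 : k)]
    {A : WeakLie3 k L} {B : WeakLie3 k M} {C : WeakLie3 k N}
    {f1 : MMap L M 1 0} {f2 : MMap L M 2 1} {f21 : MMap L M 2 2} {f3 : MMap L M 3 2}
    (hf : IsWeakMorphism k A B f1 f2 f21 f3)
    {f1' : MMap M N 1 0} {f2' : MMap M N 2 1} {f21' : MMap M N 2 2} {f3' : MMap M N 3 2}
    (hf' : IsWeakMorphism k B C f1' f2' f21' f3') (x y z : L 0) :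
    ev3 (skewMor3 k A C (cmp1 f1' f1) (cmp2 f1' f2' f1 f2) (cmp21 f1' f21' f1 f21)
        (cmp3 f1' f2' f3' f1 f2 f3)) x y z =
      ev3 (fc3 2 (skewMor3 k B C f1' f2' f21' f3') f1 f1 f1
          - fc2 2 (skewMor2 k f2') (skewMor2 k f2) f1
          + fc2 2 (skewMor2 k f2') f1 (skewMor2 k f2)
          - pa (P12 3) (fc2 2 (skewMor2 k f2') f1 (skewMor2 k f2))
          + fc1 2 f1' (skewMor3 k A B f1 f2 f21 f3)) x y z := by
  have h2 : ⅟(2 : k) * ⅟(2 : k) = 6 * (⅟(2 : k) * ⅟(2 : k) * ⅟(2 : k) * ⅟(3 : k)) := by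
    linear_combination (norm := ring_nf) (-2 * ⅟(2 : k) ^ 3) * mul_invOf_self (3 : k)
      - ⅟(2 : k) ^ 2 * mul_invOf_self (2 : k)
  have h3 : ⅟(2 : k) * ⅟(3 : k) = 4 * (⅟(2 : k) * ⅟(2 : k) * ⅟(2 : k) * ⅟(3 : k)) := by
    linear_combination (norm := ring_nf) (-2 * ⅟(2 : k) ^ 2 * ⅟(3 : k) - ⅟(2 : k) * ⅟(3 : k))
      * mul_invOf_self (2 : k)
  rw [ev3_add, ev3_sub, ev3_add, ev3_sub, ev3_fc3, ev3_fc1, ev3_pa_P12,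
    ev3_fc2_skewMor2_left k hf'.lin2, ev3_fc2_skewMor2_right k hf'.lin2,
    ev3_fc2_skewMor2_right k hf'.lin2, ev3_skewMor3, ev3_skewMor3, ev3_skewMor3]
  generalize ⅟(2 : k) * ⅟(2 : k) * ⅟(2 : k) * ⅟(3 : k) = c at h2 h3 ⊢
  rw [h2, h3]
  simp only [alternation, skewCorrection_comp hf hf', ev3_cmp3]
  simp only [← hf'.lin1.linearMap_apply, map_add, map_sub, map_smul]
  module

omit [∀ i, Module k (L i)] in
theorem PreservesZero.skewMor2 {f2 : MMap L M 2 1} (hf2 : PreservesZero f2) :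
    PreservesZero (skewMor2 k f2) :=
  .smul _ (.sum _ fun σ => .zsmul _ (hf2.pa σ))

theorem PreservesZero.skewMor3 [Invertible (3 : k)] (A : WeakLie3 k L) (B : WeakLie3 k M)
    {f1 : MMap L M 1 0} {f2 : MMap L M 2 1} {f21 : MMap L M 2 2} {f3 : MMap L M 3 2}
    (hf1 : PreservesZero f1) (hf2 : PreservesZero f2) (hf21 : PreservesZero f21)
    (hf3 : PreservesZero f3) : PreservesZero (skewMor3 k A B f1 f2 f21 f3) := by
  have hl2 := A.leib.lin2.preservesZero
  have hl21 := B.lin21.preservesZero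
  exact .sub (.smul _ (.sum _ fun σ => .zsmul _ (hf3.pa σ)))
    (.smul _ (.sum _ fun σ => .zsmul _ (.pa (.sub (.sub (.add (hf21.pc (m₁ := 0) (m₂ := 1) hl2 _)
      (hf21.pc (m₁ := 1) (m₂ := 0) hl2 _)) (hl21.fc2 hf2 hf1 _)) (hl21.fc2 hf1 hf2 _)) σ)))

end SkewSymmetrization

/-- **Skew-symmetrization is functorial up to homotopy**: for weak morphisms
`f : (L,d,λ) → (L',d',λ')` and `f' : (L',d',λ') → (L'',d'',λ'')` of weak Lie 3-algebras
over `k` with `2, 3` invertible, the skew-symmetrized components of the composite `f'∘f`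
satisfy: (i) the first component equals `f̄1'∘f̄1`; (ii) the second component equals
`f̄2'∘(f̄1,f̄1) + f̄1'∘f̄2`; (iii) the third component differs from
`f̄3'∘(f̄1,f̄1,f̄1) - f̄2'∘(f̄2,f̄1) + f̄2'∘(f̄1,f̄2) - f̄2'∘(f̄1,f̄2)^{(12)} + f̄1'∘f̄3`
by the boundary `∂(-(1/24)·Σ_σ sgn σ·(f21'∘(f2,f1) + f21'∘(f1,f2))^σ)`. -/
theorem skew_symmetrization_functorial_up_to_homotopy
    (k : Type) [CommRing k] [Invertible (2 : k)] [Invertible (3 : k)]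
    {L M N : ℤ → Type} [∀ i, AddCommGroup (L i)] [∀ i, Module k (L i)]
    [∀ i, AddCommGroup (M i)] [∀ i, Module k (M i)]
    [∀ i, AddCommGroup (N i)] [∀ i, Module k (N i)]
    (A : WeakLie3 k L) (B : WeakLie3 k M) (C : WeakLie3 k N)
    (f1 : MMap L M 1 0) (f2 : MMap L M 2 1) (f21 : MMap L M 2 2) (f3 : MMap L M 3 2)
    (hf : IsWeakMorphism k A B f1 f2 f21 f3)
    (f1' : MMap M N 1 0) (f2' : MMap M N 2 1) (f21' : MMap M N 2 2) (f3' : MMap M N 3 2)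
    (hf' : IsWeakMorphism k B C f1' f2' f21' f3') :
    cmp1 f1' f1 = fc1 0 f1' f1 ∧
    skewMor2 k (cmp2 f1' f2' f1 f2)
      = fc2 1 (skewMor2 k f2') f1 f1 + fc1 1 f1' (skewMor2 k f2) ∧
    skewMor3 k A C (cmp1 f1' f1) (cmp2 f1' f2' f1 f2) (cmp21 f1' f21' f1 f21)
        (cmp3 f1' f2' f3' f1 f2 f3)
      - (fc3 2 (skewMor3 k B C f1' f2' f21' f3') f1 f1 f1
          - fc2 2 (skewMor2 k f2') (skewMor2 k f2) f1
          + fc2 2 (skewMor2 k f2') f1 (skewMor2 k f2)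
          - pa (P12 3) (fc2 2 (skewMor2 k f2') f1 (skewMor2 k f2))
          + fc1 2 f1' (skewMor3 k A B f1 f2 f21 f3))
      = bd 2 C.D A.D
          (- (⅟ (2 : k) * ⅟ (2 : k) * ⅟ (2 : k) * ⅟ (3 : k)) •
            ∑ σ : Equiv.Perm (Fin 3), (Equiv.Perm.sign σ : ℤ) •
              pa σ (fc2 3 f21' f2 f1 + fc2 3 f21' f1 f2)) := by
  have hC : ∀ i, 2 < i → ∀ x : N i, x = 0 := fun i hi => C.bound i (.inr hi)
  have hA : ∀ i < 0, ∀ x : L i, x = 0 := fun i hi => A.bound i (.inl hi)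
  have z1 := hf.lin1.preservesZero
  have z2 := hf.lin2.preservesZero
  have z21 := hf.lin21.preservesZero
  have z3 := hf.lin3.preservesZero
  have z1' := hf'.lin1.preservesZero
  have z2' := hf'.lin2.preservesZero
  have z21' := hf'.lin21.preservesZero
  have z3' := hf'.lin3.preservesZero
  refine ⟨rfl, skewMor2_cmp2 k hf'.lin1 f2' f1 f2, ?_⟩
  have hX : - (⅟ (2 : k) * ⅟ (2 : k) * ⅟ (2 : k) * ⅟ (3 : k)) •
      ∑ σ : Equiv.Perm (Fin 3), (Equiv.Perm.sign σ : ℤ) •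
        pa σ (fc2 3 f21' f2 f1 + fc2 3 f21' f1 f2) = 0 :=
    PreservesZero.eq_zero_of_three_le (.smul _ (.sum _ fun σ => .zsmul _
      (.pa (.add (z21'.fc2 z2 z1 _) (z21'.fc2 z1 z2 _)) σ))) hA hC le_rfl
  rw [hX, bd_zero C.linD.preservesZero, sub_eq_zero]
  refine PreservesZero.ext_of_two_le (.skewMor3 k A C (z1'.fc1 z1 _)
    (.add (z2'.fc2 z1 z1 _) (z1'.fc1 z2 _)) (.add (z21'.fc2 z1 z1 _) (z1'.fc1 z21 _)) ?_)
    ?_ hA hC le_rfl fun x => ?_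
  · exact .add (.sub (.add (.sub (z3'.fc3 z1 z1 z1 _) (z2'.fc2 z2 z1 _)) (z2'.fc2 z1 z2 _))
      (.pa (z2'.fc2 z1 z2 _) _)) (z1'.fc1 z3 _)
  · have s2 := z2.skewMor2 k
    have s2' := z2'.skewMor2 k
    exact .add (.sub (.add (.sub ((PreservesZero.skewMor3 k B C z1' z2' z21' z3').fc3 z1 z1 z1 _)
      (s2'.fc2 s2 z1 _)) (s2'.fc2 z1 s2 _)) (.pa (s2'.fc2 z1 s2 _) _))
      (z1'.fc1 (.skewMor3 k A B z1 z2 z21 z3) _)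
  · have hd : (2 : ℤ) + ∑ _j : Fin 3, (0 : ℤ) = 2 := by simp
    rw [← gcast_inj hd, gcast_eq_ev3_of_eq _ hd rfl rfl rfl rfl rfl rfl,
      gcast_eq_ev3_of_eq _ hd rfl rfl rfl rfl rfl rfl]
    exact ev3_skewMor3_comp k hf hf' _ _ _

end WL3
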